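/- arXiv:2006.12105 — 2 statements merged into one kernel-verified Lean document; each statement's English description precedes it below -/
import Mathlib

section
/- Let f be an inner function with f(0)=0 and a=|f'(0)|<1. Let n ≥ 1 and let {μ_α} be the Aleksandrov–Clark measures of f^n. For any integer l with 1 ≤ |l| ≤ n, the moment α ↦ ∫ conj(z)^l dμ_α(z) is a trigonometric polynomial in α of degree at most |l|; moreover there is n_0=n_0(f) such that for n ≥ n_0 all its coefficients are bounded in modulus by a^{n/2}. -/
/-!
Since `g = f^[n]` fixes `0`, the Herglotz representation determines the Cauchy transform of `μ_α`
near `0` from its real part: `∑ l, (∫ conj z ^ l ∂μ_α) w ^ l = 1 / (1 - conj α * g w)`. Expanding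
the right-hand side geometrically, the `l`-th moment is `∑ k ∈ [1, l], [w ^ l] g ^ k * conj α ^ k`,
a trigonometric polynomial in `α`.

For the size of the coefficients, put `a = |f' 0|`. By the Schwarz lemma a compact disc
`‖z‖ ≤ r < 1` is carried by finitely many iterates into a neighbourhood of `0` on which `f`
contracts by a factor as close to `a` as desired, so `‖f^[n] z‖ ≤ q ^ n` for every `q > a` and all
large `n`. Given `a < q < p`, Cauchy's estimate on the circle of radius `r = q / p` bounds the
`l`-th coefficient of `(f^[n]) ^ k` by `q ^ n / r ^ l ≤ p ^ n` for `l ≤ n`; take `p = a ^ θ`. If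
`a = 0` the bound is zero, but then `f^[n]` vanishes at `0` to order at least `2 ^ n > l`.
-/

open MeasureTheory Set Metric Filter Complex

/-- Normalized Lebesgue (arc-length) measure on the unit circle, as a measure on ℂ. -/
noncomputable def m : Measure ℂ :=
  (ENNReal.ofReal (2 * Real.pi))⁻¹ •
    (Measure.map (fun θ : ℝ => Complex.exp ((θ : ℂ) * Complex.I))
      (volume.restrict (Set.Ioc (0:ℝ) (2 * Real.pi))))

/-- `spow F ε n` is `F^[n]` if `ε = 1` and its complex conjugate if `ε = -1`. -/
noncomputable def spow (F : ℂ → ℂ) (ε : ℤ) (n : ℕ) (z : ℂ) : ℂ :=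
  if ε = 1 then F^[n] z else (starRingEnd ℂ) (F^[n] z)

open scoped ComplexConjugate Topology

section TaylorCoefficients

/-- The `l`-th Taylor coefficient of `F` at the origin. -/
noncomputable def taylorCoeff (F : ℂ → ℂ) (l : ℕ) : ℂ := iteratedDeriv l F 0 / l.factorial

variable {F G g : ℂ → ℂ} {l : ℕ}

lemma taylorCoeff_congr (h : F =ᶠ[𝓝 0] G) (l : ℕ) : taylorCoeff F l = taylorCoeff G l := by
  rw [taylorCoeff, taylorCoeff, h.iteratedDeriv_eq]

lemma taylorCoeff_one (hl : l ≠ 0) : taylorCoeff 1 l = 0 := by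
  have h : iteratedDeriv l (1 : ℂ → ℂ) 0 = 0 := iteratedDeriv_const.trans (if_neg hl)
  rw [taylorCoeff, h, zero_div]

lemma norm_taylorCoeff_le {r M : ℝ} (hr : 0 < r) (hF : DiffContOnCl ℂ F (ball 0 r))
    (hM : ∀ z ∈ sphere 0 r, ‖F z‖ ≤ M) (l : ℕ) : ‖taylorCoeff F l‖ ≤ M / r ^ l := by
  rw [taylorCoeff, norm_div, Complex.norm_natCast, div_le_iff₀ (by positivity)]
  exact (norm_iteratedDeriv_le_of_forall_mem_sphere_norm_le l hr hF hM).trans_eq (by ring)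

lemma taylorCoeff_eq_zero_of_lt_analyticOrderAt (h : l < analyticOrderAt F 0) :
    taylorCoeff F l = 0 := by
  have hF : AnalyticAt ℂ F 0 := (analyticOrderAt_ne_zero.1 (bot_lt_of_lt h).ne').1
  have hord : ((l + 1 : ℕ) : ℕ∞) ≤ analyticOrderAt F 0 := by
    simpa using Order.add_one_le_of_lt h
  have hderiv : iteratedDeriv l F 0 = 0 :=
    (natCast_le_analyticOrderAt_iff_iteratedDeriv_eq_zero hF).1 hord l l.lt_succ_self
  rw [taylorCoeff, hderiv, zero_div]

lemma hasFPowerSeriesAt_ofScalars {c : ℕ → ℂ}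
    (h : ∀ᶠ w in 𝓝 0, HasSum (fun n => c n * w ^ n) (F w)) :
    HasFPowerSeriesAt F (FormalMultilinearSeries.ofScalars ℂ c) 0 := by
  simpa [hasFPowerSeriesAt_iff, FormalMultilinearSeries.coeff_ofScalars, mul_comm] using h

lemma taylorCoeff_eq_of_hasSum {c : ℕ → ℂ}
    (h : ∀ᶠ w in 𝓝 0, HasSum (fun n => c n * w ^ n) (F w)) (l : ℕ) : taylorCoeff F l = c l := by
  have hF := hasFPowerSeriesAt_ofScalars h
  exact congrFun (FormalMultilinearSeries.ofScalars_series_injective ℂ ℂ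
    (hF.analyticAt.hasFPowerSeriesAt.eq_formalMultilinearSeries hF)) l

lemma taylorCoeff_geom_remainder (hg : AnalyticAt ℂ g 0) (h0 : g 0 = 0) (l : ℕ) :
    taylorCoeff (g ^ (l + 1) * fun w => (1 - g w)⁻¹) l = 0 := by
  refine taylorCoeff_eq_zero_of_lt_analyticOrderAt ?_
  have hinv : AnalyticAt ℂ (fun w => (1 - g w)⁻¹) 0 :=
    (analyticAt_const.sub hg).inv (by simp [h0])
  have hord : 1 ≤ analyticOrderAt g 0 :=
    Order.one_le_iff_ne_zero.2 (analyticOrderAt_ne_zero.2 ⟨hg, h0⟩)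
  rw [analyticOrderAt_mul (hg.pow _) hinv, analyticOrderAt_pow hg]
  calc (l : ℕ∞) < (l + 1 : ℕ) := by exact_mod_cast l.lt_succ_self
    _ = (l + 1) • 1 := by simp
    _ ≤ (l + 1) • analyticOrderAt g 0 := nsmul_le_nsmul_right hord _
    _ ≤ _ := le_self_add

lemma taylorCoeff_inv_one_sub (hg : AnalyticAt ℂ g 0) (h0 : g 0 = 0) (l : ℕ) :
    taylorCoeff (fun w => (1 - g w)⁻¹) l = ∑ k ∈ Finset.range (l + 1), taylorCoeff (g ^ k) l := by
  set R : ℂ → ℂ := g ^ (l + 1) * fun w => (1 - g w)⁻¹ with hR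
  have hexp : (fun w => (1 - g w)⁻¹) =ᶠ[𝓝 0]
      (∑ k ∈ Finset.range (l + 1), g ^ k) + R := by
    filter_upwards [hg.continuousAt.eventually_ne (by simp [h0] : g 0 ≠ 1)] with w hw
    have hne : 1 - g w ≠ 0 := sub_ne_zero.2 hw.symm
    have hgeom : (∑ k ∈ Finset.range (l + 1), g w ^ k) * (1 - g w) = 1 - g w ^ (l + 1) :=
      geom_sum_mul_neg (g w) (l + 1)
    simp only [hR, Pi.add_apply, Finset.sum_apply, Pi.mul_apply, Pi.pow_apply]
    field_simp
    linear_combination -hgeom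
  have hpow : ∀ k, ContDiffAt ℂ l (g ^ k) 0 := fun k => (hg.pow k).contDiffAt
  have hsum : ContDiffAt ℂ l (∑ k ∈ Finset.range (l + 1), g ^ k) 0 :=
    (Finset.analyticAt_sum _ fun k _ => hg.pow k).contDiffAt
  have hRdiff : ContDiffAt ℂ l R 0 :=
    ((hg.pow _).mul ((analyticAt_const.sub hg).inv (by simp [h0]))).contDiffAt
  have hRl : taylorCoeff R l = 0 := taylorCoeff_geom_remainder hg h0 l
  calc taylorCoeff (fun w => (1 - g w)⁻¹) l
      = taylorCoeff (∑ k ∈ Finset.range (l + 1), g ^ k) l + taylorCoeff R l := by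
        rw [taylorCoeff_congr hexp, taylorCoeff, iteratedDeriv_add hsum hRdiff, add_div]
        rfl
    _ = ∑ k ∈ Finset.range (l + 1), taylorCoeff (g ^ k) l := by
        rw [hRl, add_zero]
        simp only [taylorCoeff, iteratedDeriv_sum fun k _ => hpow k, Finset.sum_div]

lemma taylorCoeff_const_mul_pow (c : ℂ) (g : ℂ → ℂ) (k l : ℕ) :
    taylorCoeff ((fun w => c * g w) ^ k) l = taylorCoeff (g ^ k) l * c ^ k := by
  have hmul : (fun w => c * g w) ^ k = fun w => c ^ k * (g ^ k) w := by
    ext w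
    simp only [Pi.pow_apply, mul_pow]
  rw [hmul, taylorCoeff, iteratedDeriv_const_mul_field, taylorCoeff]
  ring

end TaylorCoefficients

section Iteration

lemma norm_eq_norm_mul_norm_dslope {𝕜 E : Type*} [NontriviallyNormedField 𝕜]
    [NormedAddCommGroup E] [NormedSpace 𝕜 E] {f : 𝕜 → E} (h0 : f 0 = 0) (z : 𝕜) :
    ‖f z‖ = ‖dslope f 0 z‖ * ‖z‖ := by
  simpa [h0, norm_smul, mul_comm] using (congrArg norm (sub_smul_dslope f 0 z)).symm

lemma eventually_norm_le_mul_norm {𝕜 E : Type*} [NontriviallyNormedField 𝕜]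
    [NormedAddCommGroup E] [NormedSpace 𝕜 E] {f : 𝕜 → E} (hf : DifferentiableAt 𝕜 f 0)
    (h0 : f 0 = 0) {q : ℝ} (hq : ‖deriv f 0‖ < q) : ∀ᶠ z in 𝓝 0, ‖f z‖ ≤ q * ‖z‖ := by
  have hlt : ∀ᶠ z in 𝓝 0, ‖dslope f 0 z‖ < q :=
    (continuousAt_dslope_same.2 hf).norm.eventually_lt_const (by simpa using hq)
  filter_upwards [hlt] with z hz
  rw [norm_eq_norm_mul_norm_dslope h0]
  gcongr

lemma norm_iterate_le_pow_mul {E : Type*} [SeminormedAddGroup E] {f : E → E} {ρ r : ℝ}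
    (hρ : 0 ≤ ρ) (hρ1 : ρ ≤ 1) (h : ∀ z, ‖z‖ ≤ r → ‖f z‖ ≤ ρ * ‖z‖) (n : ℕ) {z : E}
    (hz : ‖z‖ ≤ r) : ‖f^[n] z‖ ≤ ρ ^ n * ‖z‖ := by
  induction n with
  | zero => simp
  | succ n ih =>
    rw [Function.iterate_succ_apply']
    have hle : ‖f^[n] z‖ ≤ r :=
      (ih.trans (mul_le_of_le_one_left (norm_nonneg _) (pow_le_one₀ hρ hρ1))).trans hz
    calc ‖f (f^[n] z)‖ ≤ ρ * ‖f^[n] z‖ := h _ hle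
      _ ≤ ρ * (ρ ^ n * ‖z‖) := by gcongr
      _ = ρ ^ (n + 1) * ‖z‖ := by ring

section AnalyticOrder

variable {𝕜 : Type*} [NontriviallyNormedField 𝕜] {f : 𝕜 → 𝕜}

lemma analyticAt_iterate (hf : AnalyticAt 𝕜 f 0) (h0 : f 0 = 0) (n : ℕ) :
    AnalyticAt 𝕜 f^[n] 0 := by
  induction n with
  | zero => exact analyticAt_id
  | succ n ih =>
    have ih' : AnalyticAt 𝕜 f^[n] (f 0) := by rwa [h0]
    exact ih'.comp hf

lemma analyticOrderAt_iterate (hf : AnalyticAt 𝕜 f 0) (h0 : f 0 = 0) (n : ℕ) :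
    analyticOrderAt f^[n] 0 = analyticOrderAt f 0 ^ n := by
  induction n with
  | zero => simp
  | succ n ih =>
    have hn : f^[n] 0 = 0 := Function.iterate_fixed h0 n
    have hf' : AnalyticAt 𝕜 f (f^[n] 0) := by rwa [hn]
    rw [Function.iterate_succ', hf'.analyticOrderAt_comp (analyticAt_iterate hf h0 n), hn]
    simp only [sub_zero, ih, pow_succ']

lemma natCast_lt_analyticOrderAt_iterate [CharZero 𝕜] [CompleteSpace 𝕜]
    (hf : AnalyticAt 𝕜 f 0) (h0 : f 0 = 0) (h1 : deriv f 0 = 0) (n : ℕ) :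
    n < analyticOrderAt f^[n] 0 := by
  have h2 : ((2 : ℕ) : ℕ∞) ≤ analyticOrderAt f 0 := by
    rw [natCast_le_analyticOrderAt_iff_iteratedDeriv_eq_zero hf]
    intro i hi
    interval_cases i <;> simp [h0, h1]
  rw [analyticOrderAt_iterate hf h0]
  calc (n : ℕ∞) < (2 ^ n : ℕ) := by exact_mod_cast n.lt_two_pow_self
    _ = (2 : ℕ) ^ n := by norm_cast
    _ ≤ analyticOrderAt f 0 ^ n := by gcongr

end AnalyticOrder

end Iteration

section SelfMaps

variable {f : ℂ → ℂ}

lemma norm_dslope_lt_one (hf : DifferentiableOn ℂ f (ball 0 1))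
    (hmap : MapsTo f (ball 0 1) (ball 0 1)) (h0 : f 0 = 0) (hlt : ‖deriv f 0‖ < 1)
    {z : ℂ} (hz : z ∈ ball (0 : ℂ) 1) : ‖dslope f 0 z‖ < 1 := by
  have hmap' : MapsTo f (ball 0 1) (closedBall (f 0) 1) := by
    rw [h0]; exact hmap.mono_right ball_subset_closedBall
  have hle : ‖dslope f 0 z‖ ≤ 1 := by
    simpa using norm_dslope_le_div_of_mapsTo_ball hf hmap' hz
  refine hle.lt_of_ne fun heq => ?_
  obtain ⟨C, hC, haffine⟩ := affine_of_mapsTo_ball_of_exists_norm_dslope_eq_div' hf hmap'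
    ⟨z, hz, by simpa using heq⟩
  have hderiv : deriv f 0 = C := by
    rw [(haffine.eventuallyEq_of_mem (ball_mem_nhds 0 one_pos)).deriv_eq]
    simp
  rw [hderiv, hC] at hlt
  norm_num at hlt

lemma exists_norm_le_mul_norm (hf : DifferentiableOn ℂ f (ball 0 1))
    (hmap : MapsTo f (ball 0 1) (ball 0 1)) (h0 : f 0 = 0) (hlt : ‖deriv f 0‖ < 1)
    {r : ℝ} (hr0 : 0 ≤ r) (hr1 : r < 1) :
    ∃ ρ : ℝ, 0 ≤ ρ ∧ ρ < 1 ∧ ∀ z, ‖z‖ ≤ r → ‖f z‖ ≤ ρ * ‖z‖ := by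
  have hslope : ContinuousOn (dslope f 0) (closedBall 0 r) :=
    ((differentiableOn_dslope (ball_mem_nhds 0 one_pos)).2 hf).continuousOn.mono
      (closedBall_subset_ball hr1)
  obtain ⟨z₀, hz₀, hmax⟩ := (isCompact_closedBall (0 : ℂ) r).exists_isMaxOn
    (nonempty_closedBall.2 hr0) hslope.norm
  refine ⟨‖dslope f 0 z₀‖, norm_nonneg _,
    norm_dslope_lt_one hf hmap h0 hlt (closedBall_subset_ball hr1 hz₀), fun z hz => ?_⟩
  rw [norm_eq_norm_mul_norm_dslope h0]
  gcongr
  exact hmax (mem_closedBall_zero_iff.2 hz)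

lemma eventually_norm_iterate_le_pow (hf : DifferentiableOn ℂ f (ball 0 1))
    (hmap : MapsTo f (ball 0 1) (ball 0 1)) (h0 : f 0 = 0) (hlt : ‖deriv f 0‖ < 1)
    {q : ℝ} (hq : ‖deriv f 0‖ < q) {r : ℝ} (hr0 : 0 ≤ r) (hr1 : r < 1) :
    ∀ᶠ n : ℕ in atTop, ∀ z, ‖z‖ ≤ r → ‖f^[n] z‖ ≤ q ^ n := by
  obtain ⟨s, has, hs⟩ := exists_between (lt_min hq hlt)
  obtain ⟨hsq, hs1⟩ := lt_min_iff.1 hs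
  have hs0 : 0 < s := (norm_nonneg _).trans_lt has
  have hq0 : 0 < q := hs0.trans hsq
  obtain ⟨ρ, hρ0, hρ1, hρ⟩ := exists_norm_le_mul_norm hf hmap h0 hlt hr0 hr1
  obtain ⟨δ, hδ, hball⟩ := Metric.eventually_nhds_iff_ball.1 <|
    eventually_norm_le_mul_norm (hf.differentiableAt (ball_mem_nhds 0 one_pos)) h0 has
  obtain ⟨N, hN⟩ := exists_pow_lt_of_lt_one hδ hρ1
  have hcontract : ∀ z, ‖z‖ ≤ ρ ^ N → ‖f z‖ ≤ s * ‖z‖ := fun z hz =>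
    hball z (mem_ball_zero_iff.2 (hz.trans_lt hN))
  have hratio : ∀ᶠ n : ℕ in atTop, (s / q) ^ n ≤ s ^ N :=
    (tendsto_pow_atTop_nhds_zero_of_lt_one (by positivity)
      ((div_lt_one hq0).2 hsq)).eventually_le_const (by positivity)
  filter_upwards [hratio, eventually_ge_atTop N] with n hn hNn z hz
  obtain ⟨k, rfl⟩ := Nat.exists_eq_add_of_le' hNn
  have hNz : ‖f^[N] z‖ ≤ ρ ^ N := (norm_iterate_le_pow_mul hρ0 hρ1.le hρ N hz).trans
    (mul_le_of_le_one_right (by positivity) (hz.trans hr1.le))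
  have hkz : ‖f^[k + N] z‖ ≤ s ^ k := by
    rw [Function.iterate_add_apply]
    exact (norm_iterate_le_pow_mul hs0.le hs1.le hcontract k hNz).trans
      (mul_le_of_le_one_right (by positivity) (hNz.trans (pow_le_one₀ hρ0 hρ1.le)))
  have hpow : s ^ k ≤ q ^ (k + N) := by
    rw [div_pow, div_le_iff₀ (by positivity), pow_add, mul_comm] at hn
    exact le_of_mul_le_mul_left hn (by positivity)
  exact hkz.trans hpow

lemma eventually_norm_taylorCoeff_iterate_pow_le (hf : DifferentiableOn ℂ f (ball 0 1))
    (hmap : MapsTo f (ball 0 1) (ball 0 1)) (h0 : f 0 = 0) (hlt : ‖deriv f 0‖ < 1)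
    {p : ℝ} (hp : ‖deriv f 0‖ < p) :
    ∀ᶠ n : ℕ in atTop, ∀ l ≤ n, ∀ k ≠ 0, ‖taylorCoeff (f^[n] ^ k) l‖ ≤ p ^ n := by
  obtain ⟨q, hq, hqp⟩ := exists_between hp
  have hq0 : 0 < q := (norm_nonneg _).trans_lt hq
  have hp0 : 0 < p := hq0.trans hqp
  have hr0 : 0 < q / p := by positivity
  have hr1 : q / p < 1 := (div_lt_one hp0).2 hqp
  filter_upwards [eventually_norm_iterate_le_pow hf hmap h0 hlt hq hr0.le hr1] with n hn l hl k hk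
  have hdiff : DiffContOnCl ℂ (f^[n] ^ k) (ball 0 (q / p)) :=
    (((hf.iterate hmap n).pow k).mono (closedBall_subset_ball hr1)).diffContOnCl_ball subset_rfl
  have hsphere : ∀ z ∈ sphere 0 (q / p), ‖(f^[n] ^ k) z‖ ≤ q ^ n := fun z hz => by
    rw [mem_sphere_zero_iff_norm] at hz
    have hmem : f^[n] z ∈ ball 0 1 := hmap.iterate n (by rwa [mem_ball_zero_iff, hz])
    rw [Pi.pow_apply, norm_pow]
    exact (pow_le_of_le_one (norm_nonneg _) (mem_ball_zero_iff.1 hmem).le hk).trans (hn z hz.le)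
  calc ‖taylorCoeff (f^[n] ^ k) l‖ ≤ q ^ n / (q / p) ^ l := norm_taylorCoeff_le hr0 hdiff hsphere l
    _ ≤ q ^ n / (q / p) ^ n := by
      gcongr q ^ n / ?_
      exact pow_le_pow_of_le_one hr0.le hr1.le hl
    _ = p ^ n := by rw [← div_pow, div_div_cancel₀ hq0.ne']

lemma eventually_norm_taylorCoeff_iterate_pow_le_rpow (hf : DifferentiableOn ℂ f (ball 0 1))
    (hmap : MapsTo f (ball 0 1) (ball 0 1)) (h0 : f 0 = 0) (hlt : ‖deriv f 0‖ < 1)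
    {θ : ℝ} (hθ : θ < 1) :
    ∀ᶠ n : ℕ in atTop, ∀ l ≤ n, ∀ k ≠ 0,
      ‖taylorCoeff (f^[n] ^ k) l‖ ≤ ‖deriv f 0‖ ^ (θ * n) := by
  rcases (norm_nonneg (deriv f 0)).eq_or_lt' with ha | ha
  · refine .of_forall fun n l hl k hk => ?_
    have han : AnalyticAt ℂ f 0 := hf.analyticAt (ball_mem_nhds 0 one_pos)
    have hord : l < analyticOrderAt (f^[n] ^ k) 0 := by
      rw [analyticOrderAt_pow (analyticAt_iterate han h0 n)]
      calc (l : ℕ∞) ≤ n := by exact_mod_cast hl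
        _ < analyticOrderAt f^[n] 0 :=
          natCast_lt_analyticOrderAt_iterate han h0 (norm_eq_zero.1 ha) n
        _ ≤ k • analyticOrderAt f^[n] 0 := le_self_nsmul zero_le hk
    rw [taylorCoeff_eq_zero_of_lt_analyticOrderAt hord, norm_zero]
    positivity
  · have hp : ‖deriv f 0‖ < ‖deriv f 0‖ ^ θ := by
      simpa using Real.rpow_lt_rpow_of_exponent_gt ha hlt hθ
    filter_upwards [eventually_norm_taylorCoeff_iterate_pow_le hf hmap h0 hlt hp] with n hn
    simpa only [Real.rpow_mul_natCast ha.le] using hn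

end SelfMaps

section CauchyTransform

variable {ν : Measure ℂ} {z w : ℂ}

/-- The Cauchy transform of a measure on the unit circle, the generating function of the moments
`∫ conj z ^ l ∂ν`. -/
noncomputable def cauchyTransform (ν : Measure ℂ) (w : ℂ) : ℂ := ∫ z, (1 - conj z * w)⁻¹ ∂ν

@[simp]
lemma cauchyTransform_zero (ν : Measure ℂ) : cauchyTransform ν 0 = ν.real univ := by
  simp [cauchyTransform]

lemma norm_conj_mul_lt_one (hz : ‖z‖ = 1) (hw : ‖w‖ < 1) : ‖conj z * w‖ < 1 := by
  simpa [hz] using hw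

lemma re_add_div_sub (hz : ‖z‖ = 1) (hw : ‖w‖ < 1) :
    ((z + w) / (z - w)).re = 2 * ((1 - conj z * w)⁻¹).re - 1 := by
  have hzz : z * conj z = 1 := by rw [Complex.mul_conj', hz]; norm_num
  have hne : 1 - conj z * w ≠ 0 :=
    sub_ne_zero.2 fun h => (norm_conj_mul_lt_one hz hw).ne (by rw [← h, norm_one])
  have hzw : z - w ≠ 0 := sub_ne_zero.2 fun h => hw.ne (h ▸ hz)
  have hker : (z + w) / (z - w) = 2 * (1 - conj z * w)⁻¹ - 1 := by
    rw [eq_sub_iff_add_eq, ← div_eq_mul_inv, div_add_one hzw, div_eq_div_iff hzw hne]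
    linear_combination (-2 * w) * hzz
  rw [hker]
  simp

lemma integrable_inv_one_sub_conj_mul [IsFiniteMeasure ν] (hν : ∀ᵐ z ∂ν, ‖z‖ = 1)
    (hw : ‖w‖ < 1) : Integrable (fun z : ℂ => (1 - conj z * w)⁻¹) ν := by
  refine Integrable.of_bound (by fun_prop) (1 - ‖w‖)⁻¹ ?_
  filter_upwards [hν] with z hz
  rw [norm_inv]
  exact inv_anti₀ (sub_pos.2 hw) (by simpa [hz] using norm_sub_norm_le 1 (conj z * w))

lemma hasSum_cauchyTransform [IsFiniteMeasure ν] (hν : ∀ᵐ z ∂ν, ‖z‖ = 1) (hw : ‖w‖ < 1) :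
    HasSum (fun l : ℕ => (∫ z, conj z ^ l ∂ν) * w ^ l) (cauchyTransform ν w) := by
  have hnorm : ∀ l : ℕ, ∀ᵐ z ∂ν, ‖conj z ^ l * w ^ l‖ = ‖w‖ ^ l := fun l => by
    filter_upwards [hν] with z hz
    simp [hz]
  have hint : ∀ l : ℕ, Integrable (fun z : ℂ => conj z ^ l * w ^ l) ν := fun l =>
    .of_bound (by fun_prop) (‖w‖ ^ l) ((hnorm l).mono fun _ => le_of_eq)
  have hsummable : Summable fun l : ℕ => ∫ z, ‖conj z ^ l * w ^ l‖ ∂ν := by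
    simp only [integral_congr_ae (hnorm _), integral_const, smul_eq_mul]
    exact (summable_geometric_of_lt_one (norm_nonneg w) hw).mul_left _
  have hgeom : ∫ z, ∑' l : ℕ, conj z ^ l * w ^ l ∂ν = cauchyTransform ν w := by
    refine integral_congr_ae ?_
    filter_upwards [hν] with z hz
    simp only [← mul_pow]
    exact tsum_geometric_of_norm_lt_one (norm_conj_mul_lt_one hz hw)
  simpa only [hgeom, integral_mul_const] using
    hasSum_integral_of_summable_integral_norm hint hsummable

lemma eventually_hasSum_cauchyTransform [IsFiniteMeasure ν] (hν : ∀ᵐ z ∂ν, ‖z‖ = 1) :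
    ∀ᶠ w in 𝓝 0, HasSum (fun l : ℕ => (∫ z, conj z ^ l ∂ν) * w ^ l) (cauchyTransform ν w) := by
  filter_upwards [ball_mem_nhds 0 one_pos] with w hw
  exact hasSum_cauchyTransform hν (mem_ball_zero_iff.1 hw)

lemma integral_re_add_div_sub [IsFiniteMeasure ν] (hν : ∀ᵐ z ∂ν, ‖z‖ = 1) (hw : ‖w‖ < 1) :
    ∫ z, ((z + w) / (z - w)).re ∂ν = 2 * (cauchyTransform ν w).re - ν.real univ := by
  have hint := integrable_inv_one_sub_conj_mul hν hw
  have hintre : Integrable (fun z : ℂ => ((1 - conj z * w)⁻¹).re) ν := hint.re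
  calc ∫ z, ((z + w) / (z - w)).re ∂ν = ∫ z, (2 * ((1 - conj z * w)⁻¹).re - 1) ∂ν :=
        integral_congr_ae (hν.mono fun z hz => re_add_div_sub hz hw)
    _ = 2 * ∫ z, ((1 - conj z * w)⁻¹).re ∂ν - ν.real univ := by
        rw [integral_sub (hintre.const_mul 2) (integrable_const 1), integral_const_mul]
        simp
    _ = 2 * (cauchyTransform ν w).re - ν.real univ := by
        rw [cauchyTransform]
        congr 2
        exact integral_re hint

lemma integral_conj_zpow_neg (hν : ∀ᵐ z ∂ν, ‖z‖ = 1) (l : ℤ) :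
    ∫ z, conj z ^ (-l) ∂ν = conj (∫ z, conj z ^ l ∂ν) := by
  rw [← integral_conj]
  refine integral_congr_ae ?_
  filter_upwards [hν] with z hz
  rw [map_zpow₀, zpow_neg, ← inv_zpow, ← map_inv₀, inv_eq_conj hz]

end CauchyTransform

section ClarkMeasures

variable {g : ℂ → ℂ} {α : ℂ} {ν : Measure ℂ}

/-- `ν` is the Aleksandrov–Clark measure of `g` at the point `α` of the unit circle: a finite
measure on the circle whose Poisson integral is `Re ((α + g) / (α - g))`. Measures on the circle are
encoded as measures on `ℂ` giving no mass to its complement. -/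
structure IsClarkMeasure (g : ℂ → ℂ) (α : ℂ) (ν : Measure ℂ) : Prop where
  isFiniteMeasure : IsFiniteMeasure ν
  ae_norm_eq_one : ∀ᵐ z ∂ν, ‖z‖ = 1
  re_add_div_sub_eq_integral : ∀ w ∈ ball (0 : ℂ) 1,
    ((α + g w) / (α - g w)).re = ∫ z, ((z + w) / (z - w)).re ∂ν

lemma eventually_eq_of_re_eventually_eq {F : ℂ → ℂ} {z₀ : ℂ} {c : ℝ} (hF : AnalyticAt ℂ F z₀)
    (hre : ∀ᶠ z in 𝓝 z₀, (F z).re = c) : ∀ᶠ z in 𝓝 z₀, F z = F z₀ := by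
  obtain ⟨ε, hε, hball⟩ := Metric.eventually_nhds_iff_ball.1 (hF.eventually_analyticAt.and hre)
  obtain ⟨b, hb⟩ := AnalyticOnNhd.eq_const_of_re_eq_const (fun z hz => (hball z hz).1)
    (fun z hz => (hball z hz).2) isOpen_ball
    ((convex_ball z₀ ε).isConnected ⟨z₀, mem_ball_self hε⟩)
  filter_upwards [ball_mem_nhds z₀ hε] with z hz
  rw [hb z hz, hb z₀ (mem_ball_self hε)]

namespace IsClarkMeasure

lemma measureReal_univ (hν : IsClarkMeasure g α ν) (h0 : g 0 = 0) (hα : α ≠ 0) :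
    ν.real univ = 1 := by
  have := hν.isFiniteMeasure
  have h := hν.re_add_div_sub_eq_integral 0 (mem_ball_self one_pos)
  rw [integral_re_add_div_sub hν.ae_norm_eq_one (by simp)] at h
  simp only [h0, add_zero, sub_zero, div_self hα, one_re, cauchyTransform_zero, ofReal_re] at h
  linarith

lemma cauchyTransform_eventuallyEq (hν : IsClarkMeasure g α ν) (hg : AnalyticAt ℂ g 0)
    (h0 : g 0 = 0) (hα : ‖α‖ = 1) :
    cauchyTransform ν =ᶠ[𝓝 0] fun w => (1 - conj α * g w)⁻¹ := by
  have := hν.isFiniteMeasure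
  have hmass : ν.real univ = 1 := hν.measureReal_univ h0 (by rintro rfl; simp at hα)
  set D : ℂ → ℂ := fun w => cauchyTransform ν w - (1 - conj α * g w)⁻¹ with hD
  have hcauchy : AnalyticAt ℂ (cauchyTransform ν) 0 :=
    (hasFPowerSeriesAt_ofScalars
      (eventually_hasSum_cauchyTransform hν.ae_norm_eq_one)).analyticAt
  have hDan : AnalyticAt ℂ D 0 :=
    hcauchy.sub ((analyticAt_const.sub (analyticAt_const.mul hg)).inv (by simp [h0]))
  have hDre : ∀ᶠ w in 𝓝 0, (D w).re = 0 := by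
    have hgball : ∀ᶠ w in 𝓝 0, ‖g w‖ < 1 :=
      hg.continuousAt.norm.eventually_lt_const (by simp [h0])
    filter_upwards [hgball, ball_mem_nhds 0 one_pos] with w hgw hw
    have h := hν.re_add_div_sub_eq_integral w hw
    rw [re_add_div_sub hα hgw,
      integral_re_add_div_sub hν.ae_norm_eq_one (mem_ball_zero_iff.1 hw), hmass] at h
    rw [hD, sub_re]
    linarith
  have hD0 : D 0 = 0 := by simp [hD, h0, hmass]
  filter_upwards [eventually_eq_of_re_eventually_eq hDan hDre] with w hw
  exact sub_eq_zero.1 (hw.trans hD0)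

lemma integral_conj_pow (hν : IsClarkMeasure g α ν) (hg : AnalyticAt ℂ g 0) (h0 : g 0 = 0)
    (hα : ‖α‖ = 1) {l : ℕ} (hl : l ≠ 0) :
    ∫ z, conj z ^ l ∂ν = ∑ k ∈ Finset.Icc 1 l, taylorCoeff (g ^ k) l * conj α ^ k := by
  have := hν.isFiniteMeasure
  have hcg : AnalyticAt ℂ (fun w => conj α * g w) 0 := analyticAt_const.mul hg
  calc ∫ z, conj z ^ l ∂ν = taylorCoeff (cauchyTransform ν) l :=
        (taylorCoeff_eq_of_hasSum (eventually_hasSum_cauchyTransform hν.ae_norm_eq_one) l).symm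
    _ = ∑ k ∈ Finset.range (l + 1), taylorCoeff ((fun w => conj α * g w) ^ k) l := by
        rw [taylorCoeff_congr (hν.cauchyTransform_eventuallyEq hg h0 hα),
          taylorCoeff_inv_one_sub hcg (by simp [h0])]
    _ = ∑ k ∈ Finset.Icc 1 l, taylorCoeff ((fun w => conj α * g w) ^ k) l := by
        rw [Finset.sum_range_eq_add_Ico _ l.succ_pos, pow_zero, taylorCoeff_one hl, zero_add]
        rfl
    _ = ∑ k ∈ Finset.Icc 1 l, taylorCoeff (g ^ k) l * conj α ^ k := by
        simp only [taylorCoeff_const_mul_pow]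

end IsClarkMeasure

end ClarkMeasures

section TrigonometricPolynomials

variable {g : ℂ → ℂ} {α : ℂ} {ν : Measure ℂ}

/-- The coefficient of `α ^ k` in the `l`-th moment `∫ conj z ^ l` of the Aleksandrov–Clark measure
of `g` at `α`. Only negative `k` occur, since `conj α = α⁻¹` on the unit circle. -/
noncomputable def momentCoeff (g : ℂ → ℂ) (l : ℕ) (k : ℤ) : ℂ :=
  if k < 0 then taylorCoeff (g ^ k.natAbs) l else 0

lemma norm_momentCoeff_le {B : ℝ} {l : ℕ} (hB : ∀ k ≠ 0, ‖taylorCoeff (g ^ k) l‖ ≤ B) (k : ℤ) :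
    ‖momentCoeff g l k‖ ≤ B := by
  rw [momentCoeff]
  split_ifs with hk
  · exact hB _ (Int.natAbs_ne_zero.2 hk.ne)
  · exact norm_zero.trans_le ((norm_nonneg _).trans (hB 1 one_ne_zero))

lemma sum_Icc_momentCoeff_mul_zpow (g : ℂ → ℂ) (hα : ‖α‖ = 1) (l : ℕ) :
    ∑ k ∈ Finset.Icc (-l : ℤ) l, momentCoeff g l k * α ^ k
      = ∑ k ∈ Finset.Icc 1 l, taylorCoeff (g ^ k) l * conj α ^ k := by
  simp only [momentCoeff, ite_mul, zero_mul, ← Finset.sum_filter]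
  refine Finset.sum_nbij' Int.natAbs (fun k => -(k : ℤ)) ?_ ?_ ?_ ?_ ?_
  all_goals simp only [Finset.mem_filter, Finset.mem_Icc]
  iterate 4 lia
  rintro k ⟨-, hk⟩
  have hk' : k = -(k.natAbs : ℤ) := by lia
  conv_lhs =>
    rw [hk', zpow_neg, zpow_natCast, ← inv_pow, inv_eq_conj hα, Int.natAbs_neg, Int.natAbs_natCast]

lemma conj_sum_Icc_mul_zpow (c : ℤ → ℂ) (hα : ‖α‖ = 1) (d : ℤ) :
    conj (∑ k ∈ Finset.Icc (-d) d, c k * α ^ k)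
      = ∑ k ∈ Finset.Icc (-d) d, conj (c (-k)) * α ^ k := by
  rw [map_sum]
  refine Finset.sum_nbij' (-·) (-·) ?_ ?_ ?_ ?_ fun k _ => ?_
  any_goals simp only [Finset.mem_Icc]; lia
  rw [map_mul, map_zpow₀, neg_neg, zpow_neg, ← inv_zpow, inv_eq_conj hα]

namespace IsClarkMeasure

lemma integral_conj_zpow_natCast (hν : IsClarkMeasure g α ν) (hg : AnalyticAt ℂ g 0)
    (h0 : g 0 = 0) (hα : ‖α‖ = 1) {l : ℕ} (hl : l ≠ 0) :
    ∫ z, conj z ^ (l : ℤ) ∂ν = ∑ k ∈ Finset.Icc (-l : ℤ) l, momentCoeff g l k * α ^ k := by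
  simp only [zpow_natCast, hν.integral_conj_pow hg h0 hα hl, sum_Icc_momentCoeff_mul_zpow g hα]

lemma integral_conj_zpow_neg_natCast (hν : IsClarkMeasure g α ν) (hg : AnalyticAt ℂ g 0)
    (h0 : g 0 = 0) (hα : ‖α‖ = 1) {l : ℕ} (hl : l ≠ 0) :
    ∫ z, conj z ^ (-l : ℤ) ∂ν
      = ∑ k ∈ Finset.Icc (-l : ℤ) l, conj (momentCoeff g l (-k)) * α ^ k := by
  rw [integral_conj_zpow_neg hν.ae_norm_eq_one, hν.integral_conj_zpow_natCast hg h0 hα hl,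
    conj_sum_Icc_mul_zpow _ hα]

end IsClarkMeasure

end TrigonometricPolynomials

theorem stmt17_general {f : ℂ → ℂ} (hf : DifferentiableOn ℂ f (ball 0 1))
    (hmap : MapsTo f (ball 0 1) (ball 0 1)) (h0 : f 0 = 0) (hlt : ‖deriv f 0‖ < 1)
    {θ : ℝ} (hθ : θ < 1) :
    ∃ n₀ : ℕ, ∀ (n : ℕ) (μ : ℂ → Measure ℂ), (∀ α, ‖α‖ = 1 → IsClarkMeasure f^[n] α (μ α)) →
      ∀ l : ℤ, l ≠ 0 → |l| ≤ n → ∃ c : ℤ → ℂ,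
        (∀ α, ‖α‖ = 1 → ∫ z, conj z ^ l ∂(μ α)
          = ∑ k ∈ Finset.Icc (-(l.natAbs : ℤ)) (l.natAbs : ℤ), c k * α ^ k) ∧
        (n₀ ≤ n → ∀ k : ℤ, ‖c k‖ ≤ ‖deriv f 0‖ ^ (θ * n)) := by
  obtain ⟨n₀, hn₀⟩ := eventually_atTop.1 <|
    eventually_norm_taylorCoeff_iterate_pow_le_rpow hf hmap h0 hlt hθ
  refine ⟨n₀, fun n μ hμ l hl hln => ?_⟩
  have hg : AnalyticAt ℂ f^[n] 0 :=
    analyticAt_iterate (hf.analyticAt (ball_mem_nhds 0 one_pos)) h0 n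
  have hg0 : f^[n] 0 = 0 := Function.iterate_fixed h0 n
  have hln' : l.natAbs ≤ n := by rwa [Int.abs_eq_natAbs, Nat.cast_le] at hln
  have hcoeff : n₀ ≤ n → ∀ k, ‖momentCoeff f^[n] l.natAbs k‖ ≤ ‖deriv f 0‖ ^ (θ * n) :=
    fun hn => norm_momentCoeff_le (hn₀ n hn l.natAbs hln')
  obtain ⟨d, rfl | rfl⟩ := l.eq_nat_or_neg
  · rw [Int.natAbs_natCast] at hcoeff ⊢
    exact ⟨momentCoeff f^[n] d, fun α hα =>
      (hμ α hα).integral_conj_zpow_natCast hg hg0 hα (by lia), hcoeff⟩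
  · rw [Int.natAbs_neg, Int.natAbs_natCast] at hcoeff ⊢
    exact ⟨fun k => conj (momentCoeff f^[n] d (-k)), fun α hα =>
      (hμ α hα).integral_conj_zpow_neg_natCast hg hg0 hα (by lia),
      fun hn k => (RCLike.norm_conj _).trans_le (hcoeff hn (-k))⟩

theorem stmt17 (f F : ℂ → ℂ)
    (hf : DifferentiableOn ℂ f (Metric.ball 0 1))
    (hmap : Set.MapsTo f (Metric.ball 0 1) (Metric.ball 0 1))
    (h0 : f 0 = 0)
    (hbd : ∀ᵐ z ∂m, Filter.Tendsto (fun r : ℝ => f ((r : ℂ) * z))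
      (nhdsWithin 1 (Set.Iio 1)) (nhds (F z)))
    (hinner : ∀ᵐ z ∂m, ‖F z‖ = 1)
    (hlt : ‖deriv f 0‖ < 1) :
    ∃ n₀ : ℕ, ∀ n : ℕ, 1 ≤ n → ∀ μ : ℂ → Measure ℂ,
      (∀ α : ℂ, ‖α‖ = 1 → IsProbabilityMeasure (μ α)) →
      (∀ α : ℂ, ‖α‖ = 1 → ∀ᵐ z ∂(μ α), ‖z‖ = 1) →
      (∀ α : ℂ, ‖α‖ = 1 → ∀ w ∈ Metric.ball (0:ℂ) 1,
        ((α + f^[n] w) / (α - f^[n] w)).re = ∫ z, ((z + w) / (z - w)).re ∂(μ α)) →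
      ∀ l : ℤ, 1 ≤ |l| → |l| ≤ (n : ℤ) →
        ∃ c : ℤ → ℂ,
          (∀ α : ℂ, ‖α‖ = 1 →
            ∫ z, ((starRingEnd ℂ) z) ^ l ∂(μ α)
              = ∑ k ∈ Finset.Icc (-(l.natAbs : ℤ)) (l.natAbs : ℤ), c k * α ^ k) ∧
          (n₀ ≤ n → ∀ k : ℤ, ‖c k‖ ≤ ‖deriv f 0‖ ^ ((n : ℝ) / 2)) := by
  obtain ⟨n₀, hn₀⟩ := stmt17_general hf hmap h0 hlt (θ := 1 / 2) (by norm_num)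
  simp only [one_div_mul_eq_div] at hn₀
  refine ⟨n₀, fun n _ μ hprob hcirc hclark l hl => hn₀ n μ (fun α hα => ?_) l (by grind)⟩
  have := hprob α hα
  exact ⟨inferInstance, hcirc α hα, hclark α hα⟩
end

section
/- Let f be an inner function with f(0)=0 and a=|f'(0)|<1. There exist constants C=C(f)>0 and q_0=q_0(f)>0 such that: for all 1 ≤ k ≤ q with q ≥ q_0, all signs ε_1,…,ε_k ∈ {1,−1}, and all positive integers n_1 < … < n_k with n_{j+1} − n_j > q for each j, one has |∫_{∂𝔻} ∏_{j=1}^k f^{ε_j n_j} dm| ≤ C^k · k! · a^{kq/4}. -/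
open MeasureTheory Set Metric Filter Complex

/-! A holomorphic self-map `f` of the disc with unimodular boundary values `F` satisfies Löwner's
lemma: the harmonic extension of `G ∘ F` is that of `G` composed with `f`. Near the origin, the
harmonic extension of `G` deviates from its mean by `O(|w|)` times the weighted Fourier norm
`sup_{l ≠ 0} |Ĝ(l)| r ^ |l|`. If `f 0 = 0`, then `f^[N]` maps a small circle `|w| = r` into a disc
of radius `O(a ^ N)`, `a = |f' 0|`, so passing from `G` to `G ∘ F^[N]` multiplies this norm by
`O(a ^ N)`.

Since `F` preserves arc length, a product of signed iterates may be taken to be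
`z ^ (±1) * (G ∘ F^[N])` with `N ≥ q` and `G` a product with one factor less. Multiplication by
`z ^ (±1)` shifts the Fourier coefficients: the new mean is a coefficient of `G ∘ F^[N]`, hence
`O(a ^ q)` times the weighted norm of `G`, while the old mean enters the new weighted norm. Two
factors together thus gain `a ^ q`, and each factor contributes `C * a ^ (q / 2)`. -/

open scoped ComplexConjugate Topology

namespace InnerFunction

section ArcLength

instance isProbabilityMeasure_m : IsProbabilityMeasure m := by
  constructor
  have h : (0 : ℝ) < 2 * Real.pi := by positivity
  rw [m, Measure.smul_apply, Measure.map_apply (by fun_prop) MeasurableSet.univ]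
  simp only [preimage_univ, Measure.restrict_apply, MeasurableSet.univ, univ_inter, Real.volume_Ioc,
    sub_zero, smul_eq_mul]
  exact ENNReal.inv_mul_cancel (by simpa using h) ENNReal.ofReal_ne_top

lemma ae_norm_eq_one : ∀ᵐ z ∂m, ‖z‖ = 1 := by
  refine Measure.ae_smul_measure ?_ _
  rw [ae_map_iff (by fun_prop) (measurableSet_eq_fun (by fun_prop) (by fun_prop))]
  exact ae_of_all _ fun θ => norm_exp_ofReal_mul_I θ

lemma aestronglyMeasurable_of_continuousOn {φ : ℂ → ℂ} (h : ContinuousOn φ (sphere 0 1)) :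
    AEStronglyMeasurable φ m := by
  have hm : m.restrict (sphere 0 1) = m :=
    Measure.restrict_eq_self_of_ae_mem (by simpa using ae_norm_eq_one)
  rw [← hm]
  exact h.aestronglyMeasurable isClosed_sphere.measurableSet

lemma integral_m_eq_circleAverage {φ : ℂ → ℂ} (h : AEStronglyMeasurable φ m) :
    ∫ z, φ z ∂m = Real.circleAverage φ 0 1 := by
  have hpi : (0 : ℝ) < 2 * Real.pi := by positivity
  have hac : Measure.map (fun θ : ℝ => exp ((θ : ℂ) * I))
      (volume.restrict (Set.Ioc (0 : ℝ) (2 * Real.pi))) ≪ m :=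
    Measure.AbsolutelyContinuous.rfl.smul_right (by simp [ENNReal.mul_eq_top])
  rw [Real.circleAverage, m, integral_smul_measure, integral_map (by fun_prop) (h.mono_ac hac),
    intervalIntegral.integral_of_le hpi.le, ENNReal.toReal_inv, ENNReal.toReal_ofReal hpi.le]
  simp [circleMap]

lemma conj_zpow_of_norm_eq_one {z : ℂ} (hz : ‖z‖ = 1) (l : ℤ) : conj (z ^ l) = z ^ (-l) := by
  rw [map_zpow₀, ← inv_eq_conj hz, inv_zpow, zpow_neg]

end ArcLength

section Moments

lemma ext_of_integral_fourier {T : ℝ} [Fact (0 < T)] {μ ν : Measure (AddCircle T)}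
    [IsFiniteMeasure μ] [IsFiniteMeasure ν]
    (h : ∀ n : ℤ, ∫ x, fourier n x ∂μ = ∫ x, fourier n x ∂ν) : μ = ν := by
  let Λ (ρ : Measure (AddCircle T)) [IsFiniteMeasure ρ] : C(AddCircle T, ℂ) →L[ℂ] ℂ :=
    (L1.integralCLM' ℂ).comp (ContinuousMap.toLp 1 ρ ℂ)
  have Λ_apply (ρ : Measure (AddCircle T)) [IsFiniteMeasure ρ] (g : C(AddCircle T, ℂ)) :
      Λ ρ g = ∫ x, g x ∂ρ := by
    rw [← integral_congr_ae (ContinuousMap.coeFn_toLp (p := 1) (𝕜 := ℂ) ρ g),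
      ← L1.integral_eq_integral, L1.integral_eq' ℂ]
    rfl
  have Λ_eq : Λ μ = Λ ν := by
    refine ContinuousLinearMap.ext_on
      (Submodule.dense_iff_topologicalClosure_eq_top.2 span_fourier_closure_eq_top) ?_
    rintro _ ⟨n, rfl⟩
    simpa only [Λ_apply] using h n
  refine ext_of_forall_integral_eq_of_IsFiniteMeasure fun g => ?_
  have hg := DFunLike.congr_fun Λ_eq ⟨fun x => (g x : ℂ), by fun_prop⟩
  simp only [Λ_apply, ContinuousMap.coe_mk, integral_complex_ofReal] at hg
  exact_mod_cast hg

lemma toCircle_arg {z : ℂ} (hz : ‖z‖ = 1) :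
    (AddCircle.toCircle ((arg z : ℝ) : AddCircle (2 * Real.pi)) : ℂ) = z := by
  have := norm_mul_exp_arg_mul_I z
  simpa [AddCircle.toCircle_apply_mk, hz] using this

lemma ext_of_integral_zpow {μ ν : Measure ℂ} [IsFiniteMeasure μ] [IsFiniteMeasure ν]
    (hμ : ∀ᵐ z ∂μ, ‖z‖ = 1) (hν : ∀ᵐ z ∂ν, ‖z‖ = 1)
    (h : ∀ l : ℤ, ∫ z, z ^ l ∂μ = ∫ z, z ^ l ∂ν) : μ = ν := by
  have : Fact (0 < 2 * Real.pi) := ⟨by positivity⟩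
  let angle (z : ℂ) : AddCircle (2 * Real.pi) := (arg z : ℝ)
  have measurable_angle : Measurable angle := by fun_prop
  have fourier_map {ρ : Measure ℂ} (hρ : ∀ᵐ z ∂ρ, ‖z‖ = 1) (l : ℤ) :
      ∫ x, fourier l x ∂ρ.map angle = ∫ z, z ^ l ∂ρ := by
    rw [integral_map measurable_angle.aemeasurable (by fun_prop)]
    refine integral_congr_ae (hρ.mono fun z hz => ?_)
    simp only [fourier_apply, AddCircle.toCircle_zsmul, Circle.coe_zpow, angle, toCircle_arg hz]
  have map_map_angle {ρ : Measure ℂ} (hρ : ∀ᵐ z ∂ρ, ‖z‖ = 1) :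
      (ρ.map angle).map (fun x => (AddCircle.toCircle x : ℂ)) = ρ := by
    rw [Measure.map_map (by fun_prop) measurable_angle]
    exact (Measure.map_congr (hρ.mono fun z hz => toCircle_arg hz)).trans Measure.map_id
  have map_eq : μ.map angle = ν.map angle :=
    ext_of_integral_fourier fun l => by rw [fourier_map hμ, fourier_map hν, h]
  rw [← map_map_angle hμ, map_eq, map_map_angle hν]

lemma ext_of_integral_pow {μ ν : Measure ℂ} [IsFiniteMeasure μ] [IsFiniteMeasure ν]
    (hμ : ∀ᵐ z ∂μ, ‖z‖ = 1) (hν : ∀ᵐ z ∂ν, ‖z‖ = 1)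
    (h : ∀ a : ℕ, ∫ z, z ^ a ∂μ = ∫ z, z ^ a ∂ν) : μ = ν := by
  have integral_zpow_neg {ρ : Measure ℂ} (hρ : ∀ᵐ z ∂ρ, ‖z‖ = 1) (a : ℕ) :
      ∫ z, z ^ (-(a : ℤ)) ∂ρ = conj (∫ z, z ^ a ∂ρ) := by
    rw [← integral_conj]
    exact integral_congr_ae (hρ.mono fun z hz => by
      simpa only [zpow_natCast] using (conj_zpow_of_norm_eq_one hz a).symm)
  refine ext_of_integral_zpow hμ hν fun l => ?_
  obtain ⟨a, rfl | rfl⟩ := l.eq_nat_or_neg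
  · simpa only [zpow_natCast] using h a
  · rw [integral_zpow_neg hμ, integral_zpow_neg hν, h]

end Moments

section PoissonKernel

variable {w z : ℂ}

lemma measurable_uncurry_poissonKernel_zero :
    Measurable (Function.uncurry (poissonKernel 0)) := by
  unfold Function.uncurry poissonKernel
  fun_prop

lemma measurable_poissonKernel_zero (w : ℂ) : Measurable (poissonKernel 0 w) :=
  measurable_uncurry_poissonKernel_zero.of_uncurry_left

lemma continuousOn_poissonKernel_zero (hw : ‖w‖ < 1) :
    ContinuousOn (poissonKernel 0 w) (sphere 0 1) := by
  rw [poissonKernel_eq_re_herglotzRieszKernel]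
  have hw : w ∈ ball (0 : ℂ) 1 := by simpa using hw
  simpa using continuous_re.comp_continuousOn (continuousOn_herglotzRieszKernel_sphere hw)

lemma poissonKernel_zero_nonneg (hw : ‖w‖ < 1) (hz : ‖z‖ = 1) : 0 ≤ poissonKernel 0 w z := by
  rw [poissonKernel, sub_zero, sub_zero, hz]
  have : ‖w‖ ^ 2 ≤ 1 ^ 2 := by gcongr
  exact div_nonneg (by linarith) (sq_nonneg _)

lemma poissonKernel_zero_le (hw : ‖w‖ < 1) (hz : ‖z‖ = 1) :
    poissonKernel 0 w z ≤ (1 + ‖w‖) / (1 - ‖w‖) := by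
  rw [poissonKernel_eq_re_herglotzRieszKernel]
  simpa [herglotzRieszKernel] using
    re_herglotzRieszKernel_le (c := 0) (z := z) (R := 1) (by simpa using hz) (by simpa using hw)

lemma norm_poissonKernel_zero_le (hw : ‖w‖ < 1) (hz : ‖z‖ = 1) :
    ‖(poissonKernel 0 w z : ℂ)‖ ≤ (1 + ‖w‖) / (1 - ‖w‖) := by
  rw [norm_real, Real.norm_of_nonneg (poissonKernel_zero_nonneg hw hz)]
  exact poissonKernel_zero_le hw hz

lemma poissonKernel_zero_zero (hz : ‖z‖ = 1) : poissonKernel 0 0 z = 1 := by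
  simp [poissonKernel, hz]

lemma poissonKernel_zero_mul_comm (r : ℝ) (hw : ‖w‖ = 1) (hz : ‖z‖ = 1) :
    poissonKernel 0 (r * w) z = poissonKernel 0 (r * z) w := by
  have : ‖z - r * w‖ = ‖w - r * z‖ := by
    rw [← sq_eq_sq₀ (norm_nonneg _) (norm_nonneg _), ← normSq_eq_norm_sq, ← normSq_eq_norm_sq,
      normSq_sub, normSq_sub]
    simp only [map_mul, normSq_eq_norm_sq, hw, hz, mul_re, mul_im, conj_re, conj_im, ofReal_re,
      ofReal_im, conj_ofReal]
    ring
  simp [poissonKernel, hw, hz, this]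

lemma hasSum_pow_succ_of_norm_lt_one {u : ℂ} (hu : ‖u‖ < 1) :
    HasSum (fun i : ℕ => u ^ (i + 1)) (u / (1 - u)) := by
  simpa only [pow_succ', div_eq_mul_inv] using (hasSum_geometric_of_norm_lt_one hu).mul_left u

lemma hasSum_poissonKernel_zero (hw : ‖w‖ < 1) (hz : ‖z‖ = 1) :
    HasSum (fun i : ℕ => w ^ (i + 1) * z ^ (-(i + 1 : ℤ)) + conj w ^ (i + 1) * z ^ (i + 1 : ℤ))
      (poissonKernel 0 w z - 1) := by
  have hz0 : z ≠ 0 := norm_ne_zero_iff.1 (by simp [hz])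
  set u := w / z with hu
  have hu1 : ‖u‖ < 1 := by simpa [hu, hz] using hw
  have kernel_eq : (poissonKernel 0 w z : ℂ) - 1 = u / (1 - u) + conj (u / (1 - u)) := by
    have h1u : 1 - u ≠ 0 := fun h => by simp [← sub_eq_zero.1 h] at hu1
    have hkernel : herglotzRieszKernel 0 w z = 1 + 2 * (u / (1 - u)) := by
      have : z - w = z * (1 - u) := by rw [hu]; field_simp
      rw [herglotzRieszKernel, sub_zero, sub_zero, this]
      field_simp
      rw [hu]; field_simp
      ring
    rw [poissonKernel_eq_re_herglotzRieszKernel, Function.comp_apply, hkernel, re_eq_add_conj]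
    simp only [map_add, map_mul, map_one, map_ofNat]
    ring
  have hsum := hasSum_pow_succ_of_norm_lt_one hu1
  have hconj : conj u = conj w * z := by rw [hu, map_div₀, ← inv_eq_conj hz, div_inv_eq_mul]
  rw [kernel_eq]
  refine (hsum.add (hasSum_conj'.2 hsum)).congr_fun fun i => ?_
  rw [map_pow, hconj, mul_pow, hu, div_pow, zpow_neg, div_eq_mul_inv]
  norm_cast

lemma integral_poissonKernel_mul_of_diffContOnCl {g : ℂ → ℂ} (hg : DiffContOnCl ℂ g (ball 0 1))
    (hw : ‖w‖ < 1) : ∫ z, poissonKernel 0 w z * g z ∂m = g w := by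
  have hg_sphere : ContinuousOn g (sphere 0 1) :=
    hg.continuousOn_ball.mono sphere_subset_closedBall
  rw [integral_m_eq_circleAverage (φ := fun z => poissonKernel 0 w z * g z)
      (aestronglyMeasurable_of_continuousOn
        ((continuous_ofReal.comp_continuousOn (continuousOn_poissonKernel_zero hw)).mul hg_sphere)),
    ← hg.circleAverage_poissonKernel_smul (w := w) (by simpa using hw)]
  rfl

end PoissonKernel

section RadialLimits

lemma norm_ofReal_mul_lt_one {r : ℝ} (hr : r ∈ Ioo (0 : ℝ) 1) {z : ℂ} (hz : ‖z‖ ≤ 1) :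
    ‖(r : ℂ) * z‖ < 1 := by
  rw [norm_mul, norm_real, Real.norm_of_nonneg hr.1.le]
  exact mul_lt_one_of_nonneg_of_lt_one_left hr.1.le hr.2 hz

lemma tendsto_ofReal_mul_nhdsLT_one (z : ℂ) :
    Tendsto (fun r : ℝ => (r : ℂ) * z) (𝓝[<] 1) (𝓝 z) := by
  have : ContinuousAt (fun r : ℝ => (r : ℂ) * z) 1 := by fun_prop
  simpa using this.tendsto.mono_left nhdsWithin_le_nhds

lemma diffContOnCl_comp_ofReal_mul {g : ℂ → ℂ} (hg : DifferentiableOn ℂ g (ball 0 1)) {r : ℝ}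
    (hr : r ∈ Ioo (0 : ℝ) 1) : DiffContOnCl ℂ (fun z => g (r * z)) (ball 0 1) := by
  have hd : DifferentiableOn ℂ (fun z => g (r * z)) (closedBall 0 1) :=
    hg.comp (by fun_prop) fun z hz => by
      simpa using norm_ofReal_mul_lt_one hr (by simpa using hz)
  exact (hd.mono closure_ball_subset_closedBall).diffContOnCl

lemma integral_poissonKernel_mul_radialLimit {g b : ℂ → ℂ} {M : ℝ}
    (hg : DifferentiableOn ℂ g (ball 0 1)) (hM : ∀ z ∈ ball (0 : ℂ) 1, ‖g z‖ ≤ M)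
    (hb : ∀ᵐ z ∂m, Tendsto (fun r : ℝ => g (r * z)) (𝓝[<] 1) (𝓝 (b z))) {w : ℂ} (hw : ‖w‖ < 1) :
    ∫ z, poissonKernel 0 w z * b z ∂m = g w := by
  have eventually_mem : ∀ᶠ r : ℝ in 𝓝[<] 1, r ∈ Ioo (0 : ℝ) 1 := Ioo_mem_nhdsLT zero_lt_one
  have dominated : Tendsto (fun r : ℝ => ∫ z, poissonKernel 0 w z * g (r * z) ∂m) (𝓝[<] 1)
      (𝓝 (∫ z, poissonKernel 0 w z * b z ∂m)) := by
    refine tendsto_integral_filter_of_dominated_convergence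
      (fun _ => (1 + ‖w‖) / (1 - ‖w‖) * M) ?_ ?_ (integrable_const _)
      (hb.mono fun z hz => hz.const_mul _)
    · filter_upwards [eventually_mem] with r hr
      refine (measurable_ofReal.comp (measurable_poissonKernel_zero w)).aestronglyMeasurable.mul
        (aestronglyMeasurable_of_continuousOn ?_)
      exact (diffContOnCl_comp_ofReal_mul hg hr).continuousOn_ball.mono sphere_subset_closedBall
    · filter_upwards [eventually_mem] with r hr
      filter_upwards [ae_norm_eq_one] with z hz
      rw [norm_mul]
      have hgr := hM (r * z) (by simpa using norm_ofReal_mul_lt_one hr hz.le)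
      have hP := norm_poissonKernel_zero_le hw hz
      gcongr
  have pointwise : Tendsto (fun r : ℝ => g (r * w)) (𝓝[<] 1) (𝓝 (g w)) :=
    (hg.differentiableAt (isOpen_ball.mem_nhds (by simpa using hw))).continuousAt.tendsto.comp
      (tendsto_ofReal_mul_nhdsLT_one w)
  refine tendsto_nhds_unique dominated (pointwise.congr' ?_)
  filter_upwards [eventually_mem] with r hr
  exact (integral_poissonKernel_mul_of_diffContOnCl (diffContOnCl_comp_ofReal_mul hg hr) hw).symm

end RadialLimits

section HarmonicMeasure

variable {w : ℂ}

/-- The harmonic measure of the unit circle as seen from `w`, for `‖w‖ < 1`. -/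
noncomputable def harmonicMeasure (w : ℂ) : Measure ℂ :=
  m.withDensity fun z => ENNReal.ofReal (poissonKernel 0 w z)

lemma integrable_poissonKernel_zero (hw : ‖w‖ < 1) : Integrable (poissonKernel 0 w) m :=
  .of_bound (measurable_poissonKernel_zero w).aestronglyMeasurable ((1 + ‖w‖) / (1 - ‖w‖))
    (ae_norm_eq_one.mono fun z hz => by simpa using norm_poissonKernel_zero_le hw hz)

lemma isFiniteMeasure_harmonicMeasure (hw : ‖w‖ < 1) : IsFiniteMeasure (harmonicMeasure w) :=
  isFiniteMeasure_withDensity_ofReal (integrable_poissonKernel_zero hw).2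

lemma harmonicMeasure_absolutelyContinuous (w : ℂ) : harmonicMeasure w ≪ m :=
  withDensity_absolutelyContinuous _ _

lemma harmonicMeasure_zero : harmonicMeasure 0 = m := by
  rw [harmonicMeasure, withDensity_congr_ae (g := 1), withDensity_one]
  exact ae_norm_eq_one.mono fun z hz => by simp [poissonKernel_zero_zero hz]

lemma integral_harmonicMeasure (hw : ‖w‖ < 1) (G : ℂ → ℂ) :
    ∫ z, G z ∂harmonicMeasure w = ∫ z, poissonKernel 0 w z * G z ∂m := by
  rw [harmonicMeasure, integral_withDensity_eq_integral_toReal_smul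
    (measurable_poissonKernel_zero w).ennreal_ofReal (ae_of_all _ fun _ => ENNReal.ofReal_lt_top)]
  refine integral_congr_ae (ae_norm_eq_one.mono fun z hz => ?_)
  simp only [ENNReal.toReal_ofReal (poissonKernel_zero_nonneg hw hz), real_smul]

lemma integral_harmonicMeasure_pow (hw : ‖w‖ < 1) (a : ℕ) :
    ∫ z, z ^ a ∂harmonicMeasure w = w ^ a := by
  rw [integral_harmonicMeasure hw]
  exact integral_poissonKernel_mul_of_diffContOnCl (g := fun z => z ^ a)
    (by fun_prop : Differentiable ℂ fun z : ℂ => z ^ a).diffContOnCl hw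

end HarmonicMeasure

section Inner

/-- `f` is an inner function with boundary values `F`: a holomorphic self-map of the disc whose
radial limits on the circle are almost everywhere given by `F`, of modulus one. The boundary map is
normalised to be measurable and unimodular at every point, so that it can be iterated. -/
structure IsInner (f F : ℂ → ℂ) : Prop where
  differentiableOn : DifferentiableOn ℂ f (ball 0 1)
  mapsTo : MapsTo f (ball 0 1) (ball 0 1)
  measurable : Measurable F
  norm_eq_one : ∀ z, ‖F z‖ = 1
  radialLimit : ∀ᵐ z ∂m, Tendsto (fun r : ℝ => f (r * z)) (𝓝[<] 1) (𝓝 (F z))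

namespace IsInner

variable {f F G : ℂ → ℂ} {w : ℂ}

lemma norm_lt_one (h : IsInner f F) (hw : ‖w‖ < 1) : ‖f w‖ < 1 := by
  simpa using h.mapsTo (x := w) (by simpa using hw)

/-- **Löwner's lemma.** -/
lemma map_harmonicMeasure (h : IsInner f F) (hw : ‖w‖ < 1) :
    (harmonicMeasure w).map F = harmonicMeasure (f w) := by
  have hfw := h.norm_lt_one hw
  have := isFiniteMeasure_harmonicMeasure hw
  have := isFiniteMeasure_harmonicMeasure hfw
  have norm_map : ∀ᵐ z ∂(harmonicMeasure w).map F, ‖z‖ = 1 := by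
    rw [ae_map_iff h.measurable.aemeasurable (measurableSet_eq_fun (by fun_prop) (by fun_prop))]
    exact ae_of_all _ h.norm_eq_one
  refine ext_of_integral_pow norm_map
    ((harmonicMeasure_absolutelyContinuous _).ae_le ae_norm_eq_one) fun a => ?_
  rw [integral_map h.measurable.aemeasurable (by fun_prop), integral_harmonicMeasure hw,
    integral_harmonicMeasure_pow hfw]
  refine integral_poissonKernel_mul_radialLimit (g := fun z => f z ^ a) (b := fun z => F z ^ a)
    (M := 1) (h.differentiableOn.pow a) (fun z hz => ?_)
    (h.radialLimit.mono fun z hz => hz.pow a) hw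
  rw [norm_pow]
  exact pow_le_one₀ (norm_nonneg _) (h.norm_lt_one (by simpa using hz)).le

lemma measurePreserving (h : IsInner f F) (h0 : f 0 = 0) : MeasurePreserving F m m :=
  ⟨h.measurable, by simpa [harmonicMeasure_zero, h0] using h.map_harmonicMeasure (w := 0) (by simp)⟩

end IsInner

end Inner

section Fourier

/-- The `l`-th Fourier coefficient of a function on the unit circle. -/
noncomputable def fourierCoef (G : ℂ → ℂ) (l : ℤ) : ℂ := ∫ z, z ^ (-l) * G z ∂m

/-- The Poisson integral of a function on the unit circle, its harmonic extension to the disc. -/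
noncomputable def harmonicExtension (G : ℂ → ℂ) (w : ℂ) : ℂ := ∫ z, G z ∂harmonicMeasure w

/-- The weighted supremum `sup_{l ≠ 0} |Ĝ(l)| r ^ |l|` is at most `B`. With `r < 1` this is a norm
on functions modulo constants which is weak enough to be contracted by composition with an inner
function. -/
def FourierBound (G : ℂ → ℂ) (r B : ℝ) : Prop :=
  ∀ l : ℤ, l ≠ 0 → ‖fourierCoef G l‖ * r ^ l.natAbs ≤ B

variable {G : ℂ → ℂ} {r B : ℝ} {w z : ℂ}

lemma FourierBound.nonneg (hB : FourierBound G r B) (hr : 0 ≤ r) : 0 ≤ B :=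
  (by positivity : 0 ≤ ‖fourierCoef G 1‖ * r ^ (1 : ℤ).natAbs).trans (hB 1 one_ne_zero)

lemma fourierCoef_zero (G : ℂ → ℂ) : fourierCoef G 0 = ∫ z, G z ∂m := by simp [fourierCoef]

lemma harmonicExtension_zero (G : ℂ → ℂ) : harmonicExtension G 0 = ∫ z, G z ∂m := by
  rw [harmonicExtension, harmonicMeasure_zero]

lemma integrable_zpow_mul (hG : Integrable G m) (l : ℤ) : Integrable (fun z => z ^ l * G z) m :=
  hG.bdd_mul (c := 1) (by fun_prop) (ae_norm_eq_one.mono fun z hz => by simp [hz])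

lemma integrable_zpow (l : ℤ) : Integrable (fun z : ℂ => z ^ l) m := by
  simpa using integrable_zpow_mul (integrable_const 1) l

lemma norm_integral_zpow_mul_le (G : ℂ → ℂ) {B : ℝ} (hB : ∀ᵐ z ∂m, ‖G z‖ ≤ B) (l : ℤ) :
    ‖∫ z, z ^ l * G z ∂m‖ ≤ B := by
  have := norm_integral_le_of_norm_le_const (μ := m) (f := fun z => z ^ l * G z) (C := B) <| by
    filter_upwards [ae_norm_eq_one, hB] with z hz hz'
    simpa [hz] using hz'
  simpa using this

lemma hasSum_harmonicExtension_sub (hG : Integrable G m) (hw : ‖w‖ < 1) :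
    HasSum (fun i : ℕ => w ^ (i + 1) * fourierCoef G (i + 1) +
      conj w ^ (i + 1) * fourierCoef G (-(i + 1))) (harmonicExtension G w - ∫ z, G z ∂m) := by
  let T (i : ℕ) (z : ℂ) : ℂ := w ^ (i + 1) * (z ^ (-(i + 1 : ℤ)) * G z) +
    conj w ^ (i + 1) * (z ^ (i + 1 : ℤ) * G z)
  have integrable_T (i : ℕ) : Integrable (T i) m :=
    ((integrable_zpow_mul hG _).const_mul _).add ((integrable_zpow_mul hG _).const_mul _)
  have norm_T_le (i : ℕ) : ∀ᵐ z ∂m, ‖T i z‖ ≤ 2 * ‖w‖ ^ (i + 1) * ‖G z‖ := by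
    filter_upwards [ae_norm_eq_one] with z hz
    refine (norm_add_le _ _).trans_eq ?_
    simp only [norm_mul, norm_pow, norm_zpow, hz, one_zpow, RCLike.norm_conj, one_mul]
    ring
  have summable_T : Summable fun i => ∫ z, ‖T i z‖ ∂m := by
    have geometric : Summable fun i : ℕ => ‖w‖ ^ (i + 1) :=
      (summable_nat_add_iff 1).2 (summable_geometric_of_lt_one (norm_nonneg _) hw)
    refine .of_nonneg_of_le (fun i => by positivity) (fun i => ?_)
      ((geometric.mul_left 2).mul_right (∫ z, ‖G z‖ ∂m))
    rw [← integral_const_mul]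
    exact integral_mono_ae (integrable_T i).norm (hG.norm.const_mul _) (norm_T_le i)
  have tsum_T : ∀ᵐ z ∂m, ∑' i, T i z = poissonKernel 0 w z * G z - G z := by
    filter_upwards [ae_norm_eq_one] with z hz
    rw [← sub_one_mul, ← ((hasSum_poissonKernel_zero hw hz).mul_right (G z)).tsum_eq]
    simp only [T, add_mul, mul_assoc]
  have integrable_kernel : Integrable (fun z => poissonKernel 0 w z * G z) m :=
    hG.bdd_mul (measurable_ofReal.comp (measurable_poissonKernel_zero w)).aestronglyMeasurable
      (ae_norm_eq_one.mono fun z hz => norm_poissonKernel_zero_le hw hz)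
  have hsum := hasSum_integral_of_summable_integral_norm integrable_T summable_T
  rw [integral_congr_ae tsum_T, integral_sub integrable_kernel hG,
    ← integral_harmonicMeasure hw] at hsum
  refine hsum.congr_fun fun i => ?_
  rw [integral_add ((integrable_zpow_mul hG _).const_mul _)
      ((integrable_zpow_mul hG _).const_mul _),
    integral_const_mul, integral_const_mul, fourierCoef, fourierCoef, neg_neg]

lemma FourierBound.norm_harmonicExtension_sub_le (hB : FourierBound G r B) (hG : Integrable G m)
    (hr : 0 < r) (hr1 : r ≤ 1) (hw : ‖w‖ ≤ r / 2) :
    ‖harmonicExtension G w - ∫ z, G z ∂m‖ ≤ 4 * B * (‖w‖ / r) := by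
  set x := ‖w‖ / r with hx
  have hx0 : 0 ≤ x := by positivity
  have hx2 : x ≤ 1 / 2 := by rw [hx, div_le_iff₀ hr]; linarith
  have hwx : ‖w‖ = x * r := by rw [hx]; field_simp
  have hB0 := hB.nonneg hr.le
  have term_le (c : ℂ) (hc : ‖c‖ = ‖w‖) (l : ℤ) (i : ℕ) (hl : l.natAbs = i + 1) :
      ‖c ^ (i + 1) * fourierCoef G l‖ ≤ B * x * x ^ i := by
    calc ‖c ^ (i + 1) * fourierCoef G l‖
        = x ^ (i + 1) * (‖fourierCoef G l‖ * r ^ l.natAbs) := by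
          rw [norm_mul, norm_pow, hc, hwx, hl]; ring
      _ ≤ x ^ (i + 1) * B := by gcongr; exact hB l (by lia)
      _ = B * x * x ^ i := by ring
  have geometric : HasSum (fun i : ℕ => 2 * B * x * x ^ i) (2 * B * x * (1 - x)⁻¹) :=
    (hasSum_geometric_of_lt_one hx0 (by linarith)).mul_left _
  have hsum := hasSum_harmonicExtension_sub hG (by linarith : ‖w‖ < 1)
  calc ‖harmonicExtension G w - ∫ z, G z ∂m‖
      ≤ 2 * B * x * (1 - x)⁻¹ := by
        rw [← hsum.tsum_eq]
        refine tsum_of_norm_bounded geometric fun i => (norm_add_le _ _).trans ?_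
        have h1 := term_le w rfl (i + 1) i (by lia)
        have h2 := term_le (conj w) (RCLike.norm_conj w) (-(i + 1)) i (by lia)
        linarith
    _ ≤ 2 * B * x * 2 := by
        gcongr
        rw [inv_le_comm₀ (by linarith) two_pos]
        linarith
    _ = 4 * B * x := by ring

lemma integral_harmonicMeasure_zpow_neg (hw : ‖w‖ < 1) (a : ℕ) :
    ∫ z, z ^ (-(a : ℤ)) ∂harmonicMeasure w = conj w ^ a := by
  rw [← map_pow, ← integral_harmonicMeasure_pow hw, ← integral_conj]
  refine integral_congr_ae
    ((harmonicMeasure_absolutelyContinuous w).ae_le (ae_norm_eq_one.mono fun z hz => ?_))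
  simpa only [zpow_natCast] using (conj_zpow_of_norm_eq_one hz a).symm

lemma integral_zpow {l : ℤ} (hl : l ≠ 0) : ∫ z, z ^ l ∂m = 0 := by
  rw [← harmonicMeasure_zero]
  obtain ⟨a, rfl | rfl⟩ := l.eq_nat_or_neg
  · simpa [show a ≠ 0 by lia] using integral_harmonicMeasure_pow (w := 0) (by simp) a
  · simpa [show a ≠ 0 by lia] using integral_harmonicMeasure_zpow_neg (w := 0) (by simp) a

lemma integral_zpow_mul_poissonKernel (hr0 : 0 ≤ r) (hr1 : r < 1) (hz : ‖z‖ = 1) (l : ℤ) :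
    ∫ x, x ^ (-l) * (poissonKernel 0 (r * x) z : ℂ) ∂m = r ^ l.natAbs * z ^ (-l) := by
  have hrz : ‖(r : ℂ) * z‖ < 1 := by simpa [hz, abs_of_nonneg hr0] using hr1
  have symm : ∫ x, x ^ (-l) * (poissonKernel 0 (r * x) z : ℂ) ∂m =
      ∫ x, x ^ (-l) ∂harmonicMeasure (r * z) := by
    rw [integral_harmonicMeasure hrz]
    refine integral_congr_ae (ae_norm_eq_one.mono fun x hx => ?_)
    simp only [poissonKernel_zero_mul_comm r hx hz]
    exact mul_comm _ _
  rw [symm]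
  obtain ⟨a, rfl | rfl⟩ := l.eq_nat_or_neg
  · rw [integral_harmonicMeasure_zpow_neg hrz, map_mul, conj_ofReal, ← inv_eq_conj hz, mul_pow,
      Int.natAbs_natCast, inv_pow, zpow_neg, zpow_natCast]
  · simpa [mul_pow] using integral_harmonicMeasure_pow hrz a

lemma integrable_prod_poissonKernel_mul (hG : Integrable G m) (hr0 : 0 ≤ r) (hr1 : r < 1) :
    Integrable (fun p : ℂ × ℂ => (poissonKernel 0 (r * p.1) p.2 : ℂ) * G p.2) (m.prod m) := by
  have measurable_kernel : Measurable fun p : ℂ × ℂ => (poissonKernel 0 (r * p.1) p.2 : ℂ) :=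
    measurable_ofReal.comp (measurable_uncurry_poissonKernel_zero.comp
      (by fun_prop : Measurable fun p : ℂ × ℂ => ((r : ℂ) * p.1, p.2)))
  refine (hG.comp_snd m).bdd_mul (c := (1 + r) / (1 - r)) measurable_kernel.aestronglyMeasurable ?_
  filter_upwards [Measure.quasiMeasurePreserving_fst.ae ae_norm_eq_one,
    Measure.quasiMeasurePreserving_snd.ae ae_norm_eq_one] with p h1 h2
  have hrp : ‖(r : ℂ) * p.1‖ = r := by simp [h1, abs_of_nonneg hr0]
  simpa only [hrp] using norm_poissonKernel_zero_le (w := r * p.1) (hrp.trans_lt hr1) h2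

lemma harmonicExtension_ofReal_mul_ae (G : ℂ → ℂ) (hr0 : 0 ≤ r) (hr1 : r < 1) :
    (fun x : ℂ => harmonicExtension G (r * x)) =ᵐ[m]
      fun x => ∫ z, poissonKernel 0 (r * x) z * G z ∂m :=
  ae_norm_eq_one.mono fun x hx =>
    integral_harmonicMeasure (by simpa [hx, abs_of_nonneg hr0] using hr1) G

lemma integrable_harmonicExtension_ofReal_mul (hG : Integrable G m) (hr0 : 0 ≤ r) (hr1 : r < 1) :
    Integrable (fun x : ℂ => harmonicExtension G (r * x)) m :=
  (integrable_prod_poissonKernel_mul hG hr0 hr1).integral_prod_left.congr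
    (harmonicExtension_ofReal_mul_ae G hr0 hr1).symm

lemma fourierCoef_harmonicExtension (hG : Integrable G m) (hr0 : 0 ≤ r) (hr1 : r < 1) (l : ℤ) :
    fourierCoef (fun x => harmonicExtension G (r * x)) l = r ^ l.natAbs * fourierCoef G l := by
  have integrable_prod : Integrable (fun p : ℂ × ℂ =>
      p.1 ^ (-l) * ((poissonKernel 0 (r * p.1) p.2 : ℂ) * G p.2)) (m.prod m) :=
    (integrable_prod_poissonKernel_mul hG hr0 hr1).bdd_mul (c := 1)
      (measurable_fst.pow_const (-l)).aestronglyMeasurable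
      (Measure.quasiMeasurePreserving_fst.ae ae_norm_eq_one |>.mono fun p hp => by simp [hp])
  calc fourierCoef (fun x => harmonicExtension G (r * x)) l
      = ∫ x, ∫ z, x ^ (-l) * (poissonKernel 0 (r * x) z * G z) ∂m ∂m := by
        refine integral_congr_ae ((harmonicExtension_ofReal_mul_ae G hr0 hr1).mono fun x hx => ?_)
        simp only [hx, integral_const_mul]
    _ = ∫ z, ∫ x, x ^ (-l) * (poissonKernel 0 (r * x) z * G z) ∂m ∂m :=
        integral_integral_swap integrable_prod
    _ = ∫ z, r ^ l.natAbs * (z ^ (-l) * G z) ∂m := by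
        refine integral_congr_ae (ae_norm_eq_one.mono fun z hz => ?_)
        simp only [← mul_assoc, integral_mul_const, integral_zpow_mul_poissonKernel hr0 hr1 hz]
    _ = r ^ l.natAbs * fourierCoef G l := integral_const_mul _ _

lemma norm_fourierCoef_le_of_norm_sub_le (hG : Integrable G m) {c : ℂ} {D : ℝ}
    (hD : ∀ᵐ z ∂m, ‖G z - c‖ ≤ D) {l : ℤ} (hl : l ≠ 0) : ‖fourierCoef G l‖ ≤ D := by
  have coef_eq : fourierCoef G l = ∫ z, z ^ (-l) * (G z - c) ∂m := by
    simp only [mul_sub]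
    rw [integral_sub (integrable_zpow_mul hG _) ((integrable_zpow _).mul_const c),
      integral_mul_const, integral_zpow (neg_ne_zero.2 hl), zero_mul, sub_zero, fourierCoef]
  rw [coef_eq]
  exact norm_integral_zpow_mul_le _ hD _

lemma fourierBound_of_norm_harmonicExtension_sub_le (hG : Integrable G m) (hr0 : 0 ≤ r)
    (hr1 : r < 1) {c : ℂ} {D : ℝ} (hD : ∀ w : ℂ, ‖w‖ = r → ‖harmonicExtension G w - c‖ ≤ D) :
    FourierBound G r D := by
  intro l hl
  have := norm_fourierCoef_le_of_norm_sub_le (integrable_harmonicExtension_ofReal_mul hG hr0 hr1)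
    (ae_norm_eq_one.mono fun x hx => hD (r * x) (by simp [hx, abs_of_nonneg hr0])) hl
  rwa [fourierCoef_harmonicExtension hG hr0 hr1, norm_mul, norm_pow, norm_real,
    Real.norm_of_nonneg hr0, mul_comm] at this

end Fourier
section Iterates

variable {f F G : ℂ → ℂ} {w : ℂ} {r B δ : ℝ}

namespace IsInner

lemma map_iterate_harmonicMeasure (h : IsInner f F) (hw : ‖w‖ < 1) (N : ℕ) :
    (harmonicMeasure w).map F^[N] = harmonicMeasure (f^[N] w) := by
  induction N generalizing w with
  | zero => simp
  | succ N ih =>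
    rw [Function.iterate_succ, ← Measure.map_map (h.measurable.iterate N) h.measurable,
      h.map_harmonicMeasure hw, ih (h.norm_lt_one hw), Function.iterate_succ_apply]

lemma harmonicExtension_comp_iterate (h : IsInner f F) (hG : Measurable G) (hw : ‖w‖ < 1) (N : ℕ) :
    harmonicExtension (G ∘ F^[N]) w = harmonicExtension G (f^[N] w) := by
  rw [harmonicExtension, harmonicExtension, ← h.map_iterate_harmonicMeasure hw,
    integral_map (h.measurable.iterate N).aemeasurable hG.aestronglyMeasurable]
  rfl

lemma integral_comp_iterate (h : IsInner f F) (h0 : f 0 = 0) (hG : Measurable G) (N : ℕ) :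
    ∫ z, G (F^[N] z) ∂m = ∫ z, G z ∂m := by
  simpa [harmonicExtension_zero, Function.iterate_fixed h0] using
    h.harmonicExtension_comp_iterate hG (w := 0) (by simp) N

end IsInner

lemma FourierBound.comp_iterate (hB : FourierBound G r B) (h : IsInner f F) (h0 : f 0 = 0)
    (hG : Measurable G) (hGi : Integrable G m) (hr0 : 0 < r) (hr1 : r < 1) {N : ℕ} (hδ : δ ≤ 2)
    (hf : ∀ w, ‖w‖ = r → ‖f^[N] w‖ ≤ δ * r / 4) : FourierBound (G ∘ F^[N]) r (δ * B) := by
  refine fourierBound_of_norm_harmonicExtension_sub_le (c := ∫ z, G z ∂m)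
    (((h.measurePreserving h0).iterate N).integrable_comp_of_integrable hGi) hr0.le hr1
    fun w hw => ?_
  have small : δ * r / 4 ≤ r / 2 := by nlinarith
  rw [h.harmonicExtension_comp_iterate hG (hw.trans_lt hr1)]
  calc ‖harmonicExtension G (f^[N] w) - ∫ z, G z ∂m‖
      ≤ 4 * B * (‖f^[N] w‖ / r) :=
        hB.norm_harmonicExtension_sub_le hGi hr0 hr1.le ((hf w hw).trans small)
    _ ≤ 4 * B * (δ * r / 4 / r) := by
        have := hB.nonneg hr0.le
        gcongr
        exact hf w hw
    _ = δ * B := by field_simp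

end Iterates

section Correlations

/-- The product of `k` signed iterates whose mean is the correlation to be estimated. -/
noncomputable def spowProd (F : ℂ → ℂ) (ε : ℕ → ℤ) (n : ℕ → ℕ) (k : ℕ) (z : ℂ) : ℂ :=
  ∏ j ∈ Finset.range k, spow F (ε j) (n j) z

variable {f F G : ℂ → ℂ} {ε : ℕ → ℤ} {n : ℕ → ℕ} {k q : ℕ} {r s A B : ℝ} {z : ℂ}

lemma spow_add (F : ℂ → ℂ) (ε : ℤ) (a b : ℕ) (z : ℂ) :
    spow F ε (a + b) z = spow F ε a (F^[b] z) := by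
  simp [spow, Function.iterate_add_apply]

lemma spow_zero_of_norm_eq_one (F : ℂ → ℂ) {ε : ℤ} (hε : ε = 1 ∨ ε = -1) (hz : ‖z‖ = 1) :
    spow F ε 0 z = z ^ ε := by
  rcases hε with rfl | rfl <;> simp [spow, inv_eq_conj hz]

lemma spowProd_eq_comp_iterate (F : ℂ → ℂ) (ε : ℕ → ℤ) {N : ℕ} (hN : ∀ j < k, N ≤ n j) (z : ℂ) :
    spowProd F ε n k z = spowProd F ε (fun j => n j - N) k (F^[N] z) := by
  refine Finset.prod_congr rfl fun j hj => ?_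
  rw [← spow_add, Nat.sub_add_cancel (hN j (Finset.mem_range.1 hj))]

lemma spowProd_succ (F : ℂ → ℂ) (ε : ℕ → ℤ) (n : ℕ → ℕ) (k : ℕ) (z : ℂ) :
    spowProd F ε n (k + 1) z =
      spow F (ε 0) (n 0) z * spowProd F (fun j => ε (j + 1)) (fun j => n (j + 1)) k z := by
  rw [spowProd, Finset.prod_range_succ', mul_comm, spowProd]

lemma monotoneOn_of_gap (hn : ∀ j, j + 1 < k → n j + q ≤ n (j + 1)) : MonotoneOn n (Iio k) :=
  monotoneOn_of_le_add_one ordConnected_Iio fun j _ _ hj => (Nat.le_add_right _ q).trans (hn j hj)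

lemma fourierCoef_spow_zero_mul (F G : ℂ → ℂ) {ε : ℤ} (hε : ε = 1 ∨ ε = -1) (l : ℤ) :
    fourierCoef (fun z => spow F ε 0 z * G z) l = fourierCoef G (l - ε) := by
  refine integral_congr_ae (ae_norm_eq_one.mono fun z hz => ?_)
  have hz0 : z ≠ 0 := by rintro rfl; simp at hz
  simp only [spow_zero_of_norm_eq_one F hε hz]
  rw [← mul_assoc, ← zpow_add₀ hz0, neg_sub, neg_add_eq_sub]

lemma FourierBound.norm_integral_spow_zero_mul_le (hB : FourierBound G r (A * r)) (hr : 0 < r)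
    {ε : ℤ} (hε : ε = 1 ∨ ε = -1) : ‖∫ z, spow F ε 0 z * G z ∂m‖ ≤ A := by
  have natAbs_eq : (0 - ε).natAbs = 1 := by lia
  have := hB (0 - ε) (by lia)
  rw [natAbs_eq, pow_one, ← fourierCoef_spow_zero_mul F G hε, fourierCoef_zero] at this
  exact le_of_mul_le_mul_right this hr

lemma FourierBound.spow_zero_mul (hB : FourierBound G r (A * r)) (hA : ‖∫ z, G z ∂m‖ ≤ A)
    (hr0 : 0 < r) (hr1 : r ≤ 1) {ε : ℤ} (hε : ε = 1 ∨ ε = -1) :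
    FourierBound (fun z => spow F ε 0 z * G z) r A := by
  intro l _
  rw [fourierCoef_spow_zero_mul F G hε]
  rcases eq_or_ne (l - ε) 0 with hl | hl
  · rw [hl, fourierCoef_zero]
    exact (mul_le_of_le_one_right (norm_nonneg _) (pow_le_one₀ hr0.le hr1)).trans hA
  · refine le_of_mul_le_mul_right ?_ hr0
    calc ‖fourierCoef G (l - ε)‖ * r ^ l.natAbs * r
        = ‖fourierCoef G (l - ε)‖ * r ^ (l.natAbs + 1) := by ring
      _ ≤ ‖fourierCoef G (l - ε)‖ * r ^ (l - ε).natAbs := by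
          gcongr ?_ * ?_
          exact pow_le_pow_of_le_one hr0.le hr1 (by lia)
      _ ≤ A * r := hB _ hl

namespace IsInner

lemma measurable_spowProd (h : IsInner f F) (ε : ℕ → ℤ) (n : ℕ → ℕ) (k : ℕ) :
    Measurable (spowProd F ε n k) := by
  refine Finset.measurable_prod _ fun j _ => ?_
  have := h.measurable.iterate (n j)
  unfold spow
  split_ifs
  · exact this
  · exact continuous_conj.measurable.comp this

lemma ae_norm_spowProd_eq_one (h : IsInner f F) (ε : ℕ → ℤ) (n : ℕ → ℕ) (k : ℕ) :
    ∀ᵐ z ∂m, ‖spowProd F ε n k z‖ = 1 := by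
  filter_upwards [ae_norm_eq_one] with z hz
  have norm_iterate (N : ℕ) : ‖F^[N] z‖ = 1 := by
    cases N with
    | zero => exact hz
    | succ N => rw [Function.iterate_succ_apply']; exact h.norm_eq_one _
  rw [spowProd, norm_prod]
  refine Finset.prod_eq_one fun j _ => ?_
  unfold spow
  split_ifs <;> simp [norm_iterate]

lemma integrable_spowProd (h : IsInner f F) (ε : ℕ → ℤ) (n : ℕ → ℕ) (k : ℕ) :
    Integrable (spowProd F ε n k) m :=
  .of_bound (h.measurable_spowProd ε n k).aestronglyMeasurable 1
    ((h.ae_norm_spowProd_eq_one ε n k).mono fun _ hz => hz.le)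

lemma norm_fourierCoef_spowProd_le_one (h : IsInner f F) (ε : ℕ → ℤ) (n : ℕ → ℕ) (k : ℕ) (l : ℤ) :
    ‖fourierCoef (spowProd F ε n k) l‖ ≤ 1 :=
  norm_integral_zpow_mul_le _ ((h.ae_norm_spowProd_eq_one ε n k).mono fun _ hz => hz.le) _

lemma norm_integral_spowProd_le_one (h : IsInner f F) (ε : ℕ → ℤ) (n : ℕ → ℕ) (k : ℕ) :
    ‖∫ z, spowProd F ε n k z ∂m‖ ≤ 1 := by
  simpa only [fourierCoef_zero] using h.norm_fourierCoef_spowProd_le_one ε n k 0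

lemma norm_iterate_le_of_le (h : IsInner f F) (h0 : f 0 = 0) {w : ℂ} (hw : ‖w‖ < 1) {M N : ℕ}
    (hMN : M ≤ N) : ‖f^[N] w‖ ≤ ‖f^[M] w‖ := by
  induction N, hMN using Nat.le_induction with
  | base => rfl
  | succ N _ ih =>
    have hN : ‖f^[N] w‖ < 1 := by simpa using h.mapsTo.iterate N (x := w) (by simpa using hw)
    rw [Function.iterate_succ_apply']
    exact (Complex.norm_le_norm_of_mapsTo_ball h.differentiableOn
      (h.mapsTo.mono_right ball_subset_closedBall) h0 hN).trans ih

/-- One factor gains `s` both in the mean and in the Fourier bound: the new mean is the Fourier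
coefficient of `G ∘ F^[N]` at `±1`, and the only coefficient at `l ≠ 0` which is not improved by the
composition is the one at `±1`, which is the old mean. -/
lemma norm_integral_and_fourierBound_spow_zero_mul_comp (h : IsInner f F) (h0 : f 0 = 0)
    (hr0 : 0 < r) (hr1 : r < 1) (hs0 : 0 ≤ s) (hs1 : s ≤ 1) {N : ℕ}
    (hf : ∀ w, ‖w‖ = r → ‖f^[N] w‖ ≤ (s * r / 2) ^ 2) (hG : Measurable G) (hGi : Integrable G m)
    (hmean : ‖∫ z, G z ∂m‖ ≤ s * B) (hB : FourierBound G r B) {ε : ℤ} (hε : ε = 1 ∨ ε = -1) :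
    ‖∫ z, spow F ε 0 z * G (F^[N] z) ∂m‖ ≤ s * (s * B) ∧
      FourierBound (fun z => spow F ε 0 z * G (F^[N] z)) r (s * B) := by
  have hB0 := hB.nonneg hr0.le
  have bound_comp : FourierBound (G ∘ F^[N]) r (s * (s * B) * r) := by
    convert hB.comp_iterate h h0 hG hGi hr0 hr1 (δ := s ^ 2 * r) (N := N)
      (by nlinarith [pow_le_one₀ (n := 2) hs0 hs1]) (fun w hw => (hf w hw).trans_eq (by ring))
      using 1
    ring
  have weaker : FourierBound (G ∘ F^[N]) r (s * B * r) := fun l hl =>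
    (bound_comp l hl).trans (by gcongr; exact mul_le_of_le_one_left (by positivity) hs1)
  refine ⟨bound_comp.norm_integral_spow_zero_mul_le hr0 hε, weaker.spow_zero_mul ?_ hr0 hr1.le hε⟩
  simpa only [Function.comp_apply, h.integral_comp_iterate h0 hG] using hmean

lemma norm_integral_spowProd_le_and_fourierBound (h : IsInner f F) (h0 : f 0 = 0) (hr0 : 0 < r)
    (hr1 : r < 1) (hs0 : 0 ≤ s) (hs1 : s ≤ 1) (hf : ∀ w, ‖w‖ = r → ‖f^[q] w‖ ≤ (s * r / 2) ^ 2)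
    (k : ℕ) (hε : ∀ j < k + 1, ε j = 1 ∨ ε j = -1) (hn0 : n 0 = 0)
    (hn : ∀ j, j + 1 < k + 1 → n j + q ≤ n (j + 1)) :
    ‖∫ z, spowProd F ε n (k + 1) z ∂m‖ ≤ s ^ (k + 1) ∧
      FourierBound (spowProd F ε n (k + 1)) r (s ^ k) := by
  induction k generalizing ε n with
  | zero =>
    have hε0 := hε 0 one_pos
    constructor
    · have eq_zpow : spowProd F ε n (0 + 1) =ᵐ[m] fun z => z ^ ε 0 :=
        ae_norm_eq_one.mono fun z hz => by
          simp [spowProd, hn0, spow_zero_of_norm_eq_one F hε0 hz]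
      rw [integral_congr_ae eq_zpow, integral_zpow (by lia), norm_zero]
      positivity
    · intro l _
      rw [pow_zero]
      exact mul_le_one₀ (h.norm_fourierCoef_spowProd_le_one ε n _ l) (by positivity)
        (pow_le_one₀ hr0.le hr1.le)
  | succ k ih =>
    have le_n (j : ℕ) (hj : j < k + 1) : n 1 ≤ n (j + 1) :=
      monotoneOn_of_gap hn (mem_Iio.2 (by lia)) (mem_Iio.2 (by lia)) (by lia)
    have q_le : q ≤ n 1 := by simpa [hn0] using hn 0 (by lia)
    obtain ⟨mean_tail, bound_tail⟩ := ih (ε := fun j => ε (j + 1)) (n := fun j => n (j + 1) - n 1)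
      (fun j hj => hε (j + 1) (by lia)) (by simp) fun j hj => by
        have := le_n j (by lia)
        have := hn (j + 1) (by lia)
        lia
    rw [pow_succ'] at mean_tail
    have step := h.norm_integral_and_fourierBound_spow_zero_mul_comp h0 hr0 hr1 hs0 hs1
      (fun w hw => (h.norm_iterate_le_of_le h0 (hw.trans_lt hr1) q_le).trans (hf w hw))
      (h.measurable_spowProd _ _ _) (h.integrable_spowProd _ _ _) mean_tail bound_tail
      (hε 0 (by lia))
    have eq_mul : spowProd F ε n (k + 1 + 1) = fun z => spow F (ε 0) 0 z *
        spowProd F (fun j => ε (j + 1)) (fun j => n (j + 1) - n 1) (k + 1) (F^[n 1] z) := by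
      funext z
      rw [spowProd_succ, hn0, spowProd_eq_comp_iterate F _ le_n]
    simpa only [eq_mul, pow_succ'] using step

lemma norm_integral_spowProd_le (h : IsInner f F) (h0 : f 0 = 0) (hr0 : 0 < r) (hr1 : r < 1)
    (hs0 : 0 ≤ s) (hf : ∀ w, ‖w‖ = r → ‖f^[q] w‖ ≤ (s * r / 2) ^ 2)
    (hε : ∀ j < k, ε j = 1 ∨ ε j = -1) (hn : ∀ j, j + 1 < k → n j + q ≤ n (j + 1)) :
    ‖∫ z, spowProd F ε n k z ∂m‖ ≤ s ^ k := by
  have le_one := h.norm_integral_spowProd_le_one ε n k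
  rcases le_total 1 s with hs1 | hs1
  · exact le_one.trans (one_le_pow₀ hs1)
  cases k with
  | zero => simpa using le_one
  | succ k =>
    have mono := monotoneOn_of_gap hn
    have le_n (j : ℕ) (hj : j < k + 1) : n 0 ≤ n j := mono (mem_Iio.2 (by lia)) hj (by lia)
    have eq_comp : spowProd F ε n (k + 1) =
        fun z => spowProd F ε (fun j => n j - n 0) (k + 1) (F^[n 0] z) :=
      funext (spowProd_eq_comp_iterate F ε le_n)
    rw [eq_comp, h.integral_comp_iterate h0 (h.measurable_spowProd _ _ _)]
    refine (h.norm_integral_spowProd_le_and_fourierBound h0 hr0 hr1 hs0 hs1 hf k hε (by simp)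
      fun j hj => ?_).1
    have := le_n j (by lia)
    have := hn j hj
    lia

end IsInner

end Correlations
section Schwarz

variable {f : ℂ → ℂ} {w : ℂ}

lemma norm_apply_le_mul (hf : DifferentiableOn ℂ f (ball 0 1))
    (hmap : MapsTo f (ball 0 1) (ball 0 1)) (h0 : f 0 = 0) (hw : ‖w‖ < 1) :
    ‖f w‖ ≤ (‖deriv f 0‖ + 2 * ‖w‖) * ‖w‖ := by
  have hw' : w ∈ ball (0 : ℂ) 1 := by simpa using hw
  have differentiable_dslope : DifferentiableOn ℂ (dslope f 0) (ball 0 1) :=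
    (differentiableOn_dslope (ball_mem_nhds 0 one_pos)).2 hf
  have norm_dslope_le (z : ℂ) (hz : z ∈ ball 0 1) : ‖dslope f 0 z‖ ≤ 1 := by
    simpa using Complex.norm_dslope_le_div_of_mapsTo_ball (c := 0) (R₂ := 1) hf
      (by simpa only [h0] using hmap.mono_right ball_subset_closedBall) hz
  have maps_dslope : MapsTo (dslope f 0) (ball 0 1) (closedBall (dslope f 0 0) 2) := fun z hz => by
    rw [mem_closedBall, dist_eq_norm]
    linarith [norm_sub_le (dslope f 0 z) (dslope f 0 0), norm_dslope_le z hz,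
      norm_dslope_le 0 (by simp)]
  have dist_le : ‖dslope f 0 w - deriv f 0‖ ≤ 2 * ‖w‖ := by
    simpa [dist_eq_norm] using
      Complex.dist_le_div_mul_dist_of_mapsTo_ball differentiable_dslope maps_dslope hw'
  have f_eq : f w = w * dslope f 0 w := by simpa [h0] using (sub_smul_dslope f 0 w).symm
  rw [f_eq, norm_mul, mul_comm]
  gcongr
  linarith [norm_sub_norm_le (dslope f 0 w) (deriv f 0)]

lemma norm_iterate_le_geometric (hf : DifferentiableOn ℂ f (ball 0 1))
    (hmap : MapsTo f (ball 0 1) (ball 0 1)) (h0 : f 0 = 0) (ha1 : ‖deriv f 0‖ < 1)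
    (hw : ‖w‖ ≤ (1 - ‖deriv f 0‖) / 4) (N : ℕ) :
    ‖f^[N] w‖ ≤ (1 - ‖deriv f 0‖) / 4 * ((1 + ‖deriv f 0‖) / 2) ^ N := by
  have ha0 : 0 ≤ ‖deriv f 0‖ := norm_nonneg _
  induction N with
  | zero => simpa using hw
  | succ N ih =>
    have small : ‖f^[N] w‖ ≤ (1 - ‖deriv f 0‖) / 4 :=
      ih.trans (mul_le_of_le_one_right (by linarith) (pow_le_one₀ (by positivity) (by linarith)))
    rw [Function.iterate_succ_apply', pow_succ', mul_left_comm]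
    refine (norm_apply_le_mul hf hmap h0 (by linarith)).trans ?_
    gcongr
    linarith

lemma le_exp_sum_mul_pow_of_succ_le {u b : ℕ → ℝ} {a : ℝ} (ha : 0 < a) (hu : ∀ N, 0 ≤ u N)
    (hub : ∀ N, u (N + 1) ≤ (a + b N) * u N) (N : ℕ) :
    u N ≤ Real.exp ((∑ i ∈ Finset.range N, b i) / a) * a ^ N * u 0 := by
  induction N with
  | zero => simp
  | succ N ih =>
    have factor_le : a + b N ≤ a * Real.exp (b N / a) := by
      calc a + b N = a * (b N / a + 1) := by field_simp; ring
        _ ≤ a * Real.exp (b N / a) := by gcongr; exact Real.add_one_le_exp _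
    calc u (N + 1) ≤ (a + b N) * u N := hub N
      _ ≤ a * Real.exp (b N / a) *
          (Real.exp ((∑ i ∈ Finset.range N, b i) / a) * a ^ N * u 0) :=
        mul_le_mul factor_le ih (hu N) (by positivity)
      _ = Real.exp ((∑ i ∈ Finset.range (N + 1), b i) / a) * a ^ (N + 1) * u 0 := by
        rw [Finset.sum_range_succ, add_div, Real.exp_add]
        ring

/-- The geometric decay makes the errors `2 * ‖f^[i] w‖` in the contraction factors summable, which
recovers the exact rate `‖deriv f 0‖`. -/
lemma norm_iterate_le (hf : DifferentiableOn ℂ f (ball 0 1))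
    (hmap : MapsTo f (ball 0 1) (ball 0 1)) (h0 : f 0 = 0) (ha0 : deriv f 0 ≠ 0)
    (ha1 : ‖deriv f 0‖ < 1) (hw : ‖w‖ ≤ (1 - ‖deriv f 0‖) / 4) (N : ℕ) :
    ‖f^[N] w‖ ≤ Real.exp (1 / ‖deriv f 0‖) * ‖deriv f 0‖ ^ N := by
  have ha := norm_pos_iff.2 ha0
  have hw1 : ‖w‖ < 1 := by linarith
  have step (N : ℕ) :
      ‖f^[N + 1] w‖ ≤ (‖deriv f 0‖ + 2 * ‖f^[N] w‖) * ‖f^[N] w‖ := by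
    rw [Function.iterate_succ_apply']
    refine norm_apply_le_mul hf hmap h0 ?_
    simpa using hmap.iterate N (x := w) (by simpa using hw1)
  have sum_le : ∑ i ∈ Finset.range N, 2 * ‖f^[i] w‖ ≤ 1 := by
    set θ := (1 + ‖deriv f 0‖) / 2 with hθ
    calc ∑ i ∈ Finset.range N, 2 * ‖f^[i] w‖ ≤ ∑ i ∈ Finset.range N, (1 - θ) * θ ^ i :=
          Finset.sum_le_sum fun i _ => by
            rw [show 1 - θ = 2 * ((1 - ‖deriv f 0‖) / 4) by rw [hθ]; ring, mul_assoc]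
            gcongr
            exact norm_iterate_le_geometric hf hmap h0 ha1 hw i
      _ = 1 - θ ^ N := by rw [← Finset.mul_sum, mul_neg_geom_sum]
      _ ≤ 1 := by
        have : 0 ≤ θ ^ N := by positivity
        linarith
  calc ‖f^[N] w‖
      ≤ Real.exp ((∑ i ∈ Finset.range N, 2 * ‖f^[i] w‖) / ‖deriv f 0‖) * ‖deriv f 0‖ ^ N * ‖w‖ :=
        le_exp_sum_mul_pow_of_succ_le (u := fun N => ‖f^[N] w‖) ha (fun N => norm_nonneg _) step N
    _ ≤ Real.exp (1 / ‖deriv f 0‖) * ‖deriv f 0‖ ^ N * 1 := by gcongr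
    _ = Real.exp (1 / ‖deriv f 0‖) * ‖deriv f 0‖ ^ N := mul_one _

lemma norm_iterate_two_le_of_deriv_eq_zero (hf : DifferentiableOn ℂ f (ball 0 1))
    (hmap : MapsTo f (ball 0 1) (ball 0 1)) (h0 : f 0 = 0) (ha0 : deriv f 0 = 0) (hw : ‖w‖ < 1) :
    ‖f^[2] w‖ ≤ 8 * ‖w‖ ^ 4 := by
  have norm_apply_le (z : ℂ) (hz : ‖z‖ < 1) : ‖f z‖ ≤ 2 * ‖z‖ ^ 2 := by
    simpa [ha0, pow_two, mul_assoc] using norm_apply_le_mul hf hmap h0 hz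
  have hfw : ‖f w‖ < 1 := by simpa using hmap (x := w) (by simpa using hw)
  calc ‖f^[2] w‖ ≤ 2 * ‖f w‖ ^ 2 := norm_apply_le _ hfw
    _ ≤ 2 * (2 * ‖w‖ ^ 2) ^ 2 := by gcongr; exact norm_apply_le w hw
    _ = 8 * ‖w‖ ^ 4 := by ring

end Schwarz
section BoundaryValues

variable {f F F' : ℂ → ℂ}

lemma aemeasurable_of_radialLimit (hf : DifferentiableOn ℂ f (ball 0 1))
    (hF : ∀ᵐ z ∂m, Tendsto (fun r : ℝ => f (r * z)) (𝓝[<] 1) (𝓝 (F z))) : AEMeasurable F m := by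
  obtain ⟨u, -, hu, hlim⟩ := exists_seq_strictMono_tendsto' (zero_lt_one (α := ℝ))
  have hu' : Tendsto u atTop (𝓝[<] 1) :=
    tendsto_nhdsWithin_iff.2 ⟨hlim, Eventually.of_forall fun i => (hu i).2⟩
  refine aemeasurable_of_tendsto_metrizable_ae' (f := fun i z => f (u i * z)) (fun i => ?_)
    (hF.mono fun z hz => hz.comp hu')
  have := (diffContOnCl_comp_ofReal_mul hf (hu i)).2
  rw [closure_ball _ one_ne_zero] at this
  exact (aestronglyMeasurable_of_continuousOn (this.mono sphere_subset_closedBall)).aemeasurable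

lemma exists_isInner_ae_eq (hf : DifferentiableOn ℂ f (ball 0 1))
    (hmap : MapsTo f (ball 0 1) (ball 0 1))
    (hF : ∀ᵐ z ∂m, Tendsto (fun r : ℝ => f (r * z)) (𝓝[<] 1) (𝓝 (F z)))
    (hF1 : ∀ᵐ z ∂m, ‖F z‖ = 1) : ∃ F', IsInner f F' ∧ F =ᵐ[m] F' := by
  have hm := aemeasurable_of_radialLimit hf hF
  set F₀ := hm.mk F
  have hF₀ : Measurable F₀ := hm.measurable_mk
  have ae_eq : F =ᵐ[m] fun z => if ‖F₀ z‖ = 1 then F₀ z else 1 := by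
    filter_upwards [hm.ae_eq_mk, hF1] with z hz hz1
    rw [hz] at hz1 ⊢
    exact (if_pos hz1).symm
  refine ⟨_, ⟨hf, hmap, .ite (measurableSet_eq_fun hF₀.norm measurable_const) hF₀ measurable_const,
    fun z => ?_, ?_⟩, ae_eq⟩
  · split_ifs with h
    exacts [h, norm_one]
  · filter_upwards [hF, ae_eq] with z hz hz'
    rwa [← hz']

lemma iterate_ae_eq (hF' : MeasurePreserving F' m m) (h : F =ᵐ[m] F') (N : ℕ) :
    F^[N] =ᵐ[m] F'^[N] := by
  induction N with
  | zero => rfl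
  | succ N ih =>
    filter_upwards [h, hF'.quasiMeasurePreserving.ae ih] with z hz hz'
    rw [Function.iterate_succ_apply, Function.iterate_succ_apply, hz, hz']

lemma spowProd_ae_eq (hF' : MeasurePreserving F' m m) (h : F =ᵐ[m] F') (ε : ℕ → ℤ) (n : ℕ → ℕ)
    (k : ℕ) : spowProd F ε n k =ᵐ[m] spowProd F' ε n k := by
  filter_upwards [ae_all_iff.2 (iterate_ae_eq hF' h)] with z hz
  simp only [spowProd, spow, hz]

end BoundaryValues

lemma pow_mul_rpow_half_le {a C x : ℝ} (hC : 0 ≤ C) (ha0 : 0 ≤ a) (ha1 : a ≤ 1) (k : ℕ)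
    (hx : 0 ≤ x) : C ^ k * a ^ (x / 2) ≤ C ^ k * k.factorial * a ^ (x / 4) := by
  have one_le_factorial : (1 : ℝ) ≤ k.factorial := by exact_mod_cast k.factorial_pos
  refine mul_le_mul (le_mul_of_one_le_right (by positivity) one_le_factorial) ?_
    (by positivity) (by positivity)
  exact Real.rpow_le_rpow_of_exponent_ge' ha0 ha1 (by positivity) (by linarith)

section Decay

variable {f F : ℂ → ℂ} {ε : ℕ → ℤ} {n : ℕ → ℕ} {k q : ℕ}

namespace IsInner

lemma norm_integral_spowProd_le_rpow (h : IsInner f F) (h0 : f 0 = 0) (ha0 : deriv f 0 ≠ 0)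
    (ha1 : ‖deriv f 0‖ < 1) (hε : ∀ j < k, ε j = 1 ∨ ε j = -1)
    (hn : ∀ j, j + 1 < k → n j + q ≤ n (j + 1)) :
    ‖∫ z, spowProd F ε n k z ∂m‖ ≤
      (8 * Real.exp (1 / (2 * ‖deriv f 0‖)) / (1 - ‖deriv f 0‖)) ^ k *
        ‖deriv f 0‖ ^ (((k * q : ℕ) : ℝ) / 2) := by
  set a := ‖deriv f 0‖
  have a_pos : 0 < a := norm_pos_iff.2 ha0
  have one_sub_pos : 0 < 1 - a := by linarith
  set r := (1 - a) / 4 with hr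
  set s := 8 * Real.exp (1 / (2 * a)) / (1 - a) * a ^ ((q : ℝ) / 2) with hs
  have sq_eq : (s * r / 2) ^ 2 = Real.exp (1 / a) * a ^ q := by
    have half : s * r / 2 = Real.exp (1 / (2 * a)) * a ^ ((q : ℝ) / 2) := by
      rw [hs, hr]
      field_simp
      norm_num
    rw [half, mul_pow, ← Real.exp_nat_mul, ← Real.rpow_mul_natCast a_pos.le, ← Real.rpow_natCast]
    congr 2 <;> push_cast <;> field_simp
  have := h.norm_integral_spowProd_le h0 (r := r) (s := s) (by positivity) (by linarith)
    (by positivity) (fun w hw => ?_) hε hn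
  · rwa [hs, mul_pow, ← Real.rpow_mul_natCast a_pos.le, div_mul_eq_mul_div, ← Nat.cast_mul,
      mul_comm q] at this
  · exact (norm_iterate_le h.differentiableOn h.mapsTo h0 ha0 ha1 hw.le q).trans_eq sq_eq.symm

lemma integral_spowProd_eq_zero (h : IsInner f F) (h0 : f 0 = 0) (ha0 : deriv f 0 = 0)
    (hk : k ≠ 0) (hε : ∀ j < k, ε j = 1 ∨ ε j = -1) (hn : ∀ j, j + 1 < k → n j + 2 ≤ n (j + 1)) :
    ∫ z, spowProd F ε n k z ∂m = 0 := by
  have norm_le : ∀ᶠ r : ℝ in 𝓝[>] 0, ‖∫ z, spowProd F ε n k z ∂m‖ ≤ (6 * r) ^ k := by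
    filter_upwards [Ioo_mem_nhdsGT one_pos] with r hr
    refine h.norm_integral_spowProd_le h0 hr.1 hr.2 (by linarith [hr.1]) (fun w hw => ?_) hε hn
    refine (norm_iterate_two_le_of_deriv_eq_zero h.differentiableOn h.mapsTo h0 ha0
      (hw.trans_lt hr.2)).trans ?_
    rw [hw]
    nlinarith [pow_pos hr.1 4]
  have tendsto_zero : Tendsto (fun r : ℝ => (6 * r) ^ k) (𝓝[>] 0) (𝓝 0) := by
    have : Continuous fun r : ℝ => (6 * r) ^ k := by fun_prop
    simpa [hk] using (this.tendsto 0).mono_left nhdsWithin_le_nhds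
  simpa using ge_of_tendsto tendsto_zero norm_le

lemma exists_norm_integral_spowProd_le (h : IsInner f F) (h0 : f 0 = 0) :
    ∃ C : ℝ, 0 < C ∧ ∀ q k : ℕ, ∀ ε : ℕ → ℤ, (∀ j < k, ε j = 1 ∨ ε j = -1) →
      ∀ n : ℕ → ℕ, (∀ j, j + 1 < k → n j + q < n (j + 1)) →
        ‖∫ z, spowProd F ε n k z ∂m‖ ≤ C ^ k * ‖deriv f 0‖ ^ (((k * q : ℕ) : ℝ) / 2) := by
  rcases eq_or_ne (deriv f 0) 0 with ha0 | ha0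
  · refine ⟨1, one_pos, fun q k ε hε n hn => ?_⟩
    rcases eq_or_ne (k * q) 0 with hkq | hkq
    · simpa [hkq] using h.norm_integral_spowProd_le_one ε n k
    · obtain ⟨hk, hq⟩ := mul_ne_zero_iff.1 hkq
      rw [h.integral_spowProd_eq_zero h0 ha0 hk hε fun j hj => by have := hn j hj; lia, norm_zero]
      positivity
  rcases lt_or_ge ‖deriv f 0‖ 1 with ha1 | ha1
  · exact ⟨8 * Real.exp (1 / (2 * ‖deriv f 0‖)) / (1 - ‖deriv f 0‖),
      div_pos (by positivity) (sub_pos.2 ha1), fun q k ε hε n hn =>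
        h.norm_integral_spowProd_le_rpow h0 ha0 ha1 hε fun j hj => (hn j hj).le⟩
  · refine ⟨1, one_pos, fun q k ε _ n _ => (h.norm_integral_spowProd_le_one ε n k).trans ?_⟩
    rw [one_pow, one_mul]
    exact Real.one_le_rpow ha1 (by positivity)

end IsInner

end Decay

end InnerFunction

theorem stmt18_general (f F : ℂ → ℂ)
    (hf : DifferentiableOn ℂ f (ball 0 1))
    (hmap : MapsTo f (ball 0 1) (ball 0 1))
    (h0 : f 0 = 0)
    (hbd : ∀ᵐ z ∂m, Tendsto (fun r : ℝ => f (r * z)) (nhdsWithin 1 (Iio 1)) (nhds (F z)))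
    (hinner : ∀ᵐ z ∂m, ‖F z‖ = 1) :
    ∃ C : ℝ, 0 < C ∧ ∀ q k : ℕ, ∀ ε : ℕ → ℤ, (∀ j < k, ε j = 1 ∨ ε j = -1) →
      ∀ n : ℕ → ℕ, (∀ j, j + 1 < k → n j + q < n (j + 1)) →
        ‖∫ z, ∏ j ∈ Finset.range k, spow F (ε j) (n j) z ∂m‖
          ≤ C ^ k * ‖deriv f 0‖ ^ (((k * q : ℕ) : ℝ) / 2) := by
  obtain ⟨F', h, hFF'⟩ := InnerFunction.exists_isInner_ae_eq hf hmap hbd hinner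
  obtain ⟨C, hC, bound⟩ := h.exists_norm_integral_spowProd_le h0
  refine ⟨C, hC, fun q k ε hε n hn => ?_⟩
  have := integral_congr_ae (InnerFunction.spowProd_ae_eq (h.measurePreserving h0) hFF' ε n k)
  exact (congrArg norm this).trans_le (bound q k ε hε n hn)

theorem stmt18 (f F : ℂ → ℂ)
    (hf : DifferentiableOn ℂ f (Metric.ball 0 1))
    (hmap : Set.MapsTo f (Metric.ball 0 1) (Metric.ball 0 1))
    (h0 : f 0 = 0)
    (hbd : ∀ᵐ z ∂m, Filter.Tendsto (fun r : ℝ => f ((r : ℂ) * z))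
      (nhdsWithin 1 (Set.Iio 1)) (nhds (F z)))
    (hinner : ∀ᵐ z ∂m, ‖F z‖ = 1)
    (hlt : ‖deriv f 0‖ < 1) :
    ∃ C : ℝ, 0 < C ∧ ∃ q₀ : ℕ, 0 < q₀ ∧ ∀ q : ℕ, q₀ ≤ q → ∀ k : ℕ, 1 ≤ k → k ≤ q →
      ∀ ε : ℕ → ℤ, (∀ j < k, ε j = 1 ∨ ε j = -1) →
      ∀ n : ℕ → ℕ, (∀ j < k, 0 < n j) →
        (∀ j : ℕ, j + 1 < k → n j < n (j + 1) ∧ q < n (j + 1) - n j) →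
        ‖∫ z, ∏ j ∈ Finset.range k, spow F (ε j) (n j) z ∂m‖
          ≤ C ^ k * (Nat.factorial k : ℝ) * ‖deriv f 0‖ ^ (((k * q : ℕ) : ℝ) / 4) := by
  obtain ⟨C, hC, bound⟩ := stmt18_general f F hf hmap h0 hbd hinner
  exact ⟨C, hC, 1, one_pos, fun q _ k _ _ ε hε n _ hn =>
    (bound q k ε hε n fun j hj => Nat.add_lt_of_lt_sub' (hn j hj).2).trans
      (InnerFunction.pow_mul_rpow_half_le hC.le (norm_nonneg _) hlt.le k (by positivity))⟩
end
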